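/- The origin is bounded away from the Nehari manifold and from its negative side in the Dirichlet norm: every admissible map u with ‖u‖ ≠ 0 and D(u) ≤ 0 satisfies ‖u‖² ≥ 8π/H². In particular, all u in 𝒩 = {u : D(u) = 0, u ≠ 0} and all u in 𝒩₋ = {u : D(u) < 0} satisfy ‖u‖ ≥ 2√(2π)/H. -/

import Mathlib

open MeasureTheory Real Filter

/-- x-partial derivative of a map `u : ℝ² → ℝ³`. -/
noncomputable def pderivX (u : ℝ × ℝ → Fin 3 → ℝ) (p : ℝ × ℝ) : Fin 3 → ℝ :=
  fderiv ℝ u p (1, 0)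

/-- y-partial derivative of a map `u : ℝ² → ℝ³`. -/
noncomputable def pderivY (u : ℝ × ℝ → Fin 3 → ℝ) (p : ℝ × ℝ) : Fin 3 → ℝ :=
  fderiv ℝ u p (0, 1)

/-- Euclidean dot product on `ℝ³`. -/
def dot3 (a b : Fin 3 → ℝ) : ℝ := ∑ i, a i * b i

/-- Squared Dirichlet norm `‖u‖² = ∫_Ω |∇u|²`. -/
noncomputable def dirEnergy (Ω : Set (ℝ × ℝ)) (u : ℝ × ℝ → Fin 3 → ℝ) : ℝ :=
  ∫ p in Ω, (dot3 (pderivX u p) (pderivX u p) + dot3 (pderivY u p) (pderivY u p))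

/-- Dirichlet norm `‖u‖`. -/
noncomputable def dnorm (Ω : Set (ℝ × ℝ)) (u : ℝ × ℝ → Fin 3 → ℝ) : ℝ :=
  Real.sqrt (dirEnergy Ω u)

/-- Volume functional `V(u) = ∫_Ω u · (u_x ∧ u_y)`. -/
noncomputable def vol (Ω : Set (ℝ × ℝ)) (u : ℝ × ℝ → Fin 3 → ℝ) : ℝ :=
  ∫ p in Ω, dot3 (u p) (crossProduct (pderivX u p) (pderivY u p))

/-- An admissible map: smooth with compact support contained in `Ω`. -/
def IsAdmissible (Ω : Set (ℝ × ℝ)) (u : ℝ × ℝ → Fin 3 → ℝ) : Prop :=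
  ContDiff ℝ (⊤ : ℕ∞) u ∧ HasCompactSupport u ∧ tsupport u ⊆ Ω

/-- Energy functional `E(u) = (1/2)‖u‖² + (2H/3)·V(u)`. -/
noncomputable def Efun (Ω : Set (ℝ × ℝ)) (H : ℝ) (u : ℝ × ℝ → Fin 3 → ℝ) : ℝ :=
  (1 / 2) * dirEnergy Ω u + (2 * H / 3) * vol Ω u

/-- Modified Nehari functional `D_δ(u) = δ‖u‖² + 2H·V(u)`; `D = D₁`. -/
noncomputable def Dfun (Ω : Set (ℝ × ℝ)) (H δ : ℝ) (u : ℝ × ℝ → Fin 3 → ℝ) : ℝ :=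
  δ * dirEnergy Ω u + 2 * H * vol Ω u

/-- The radius `r(δ) = 2√(2π)·δ/H`. -/
noncomputable def rPW (H δ : ℝ) : ℝ := 2 * Real.sqrt (2 * Real.pi) * δ / H

/-- The coefficient `a(δ) = 1/2 − δ/3`. -/
noncomputable def aPW (δ : ℝ) : ℝ := 1 / 2 - δ / 3


noncomputable def gcirc (x : ℝ) : ℝ := ∫ t in (0:ℝ)..x, √(1 - t ^ 2)

lemma gcirc_hasDerivAt (x : ℝ) : HasDerivAt gcirc (√(1 - x ^ 2)) x := by
  have hc : Continuous fun t : ℝ => √(1 - t ^ 2) := by fun_prop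
  exact intervalIntegral.integral_hasDerivAt_right (hc.intervalIntegrable _ _)
    hc.aestronglyMeasurable.stronglyMeasurableAtFilter hc.continuousAt

lemma gcirc_diff : gcirc 1 - gcirc (-1) = π / 2 := by
  have hc : Continuous fun t : ℝ => √(1 - t ^ 2) := by fun_prop
  unfold gcirc
  rw [intervalIntegral.integral_interval_sub_left (hc.intervalIntegrable _ _)
    (hc.intervalIntegrable _ _)]
  exact integral_sqrt_one_sub_sq

lemma cs2 (a b c d r l : ℝ) (hr : 0 ≤ r) (hl : 0 ≤ l) (h1 : a ^ 2 + b ^ 2 ≤ r ^ 2)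
    (h2 : c ^ 2 + d ^ 2 ≤ l ^ 2) : a * c + b * d ≤ r * l := by
  refine (le_abs_self _).trans (abs_le_of_sq_le_sq ?_ (by positivity))
  have : (a ^ 2 + b ^ 2) * (c ^ 2 + d ^ 2) ≤ r ^ 2 * l ^ 2 := by gcongr
  nlinarith [sq_nonneg (a * d - b * c)]

lemma seg_ineq (R x0 x1 dy e : ℝ) (hR : 0 < R) (h0 : |x0| ≤ R) (h1 : |x1| ≤ R)
    (he : e ^ 2 = 1) :
    (x0 + x1) / 2 * dy + e * (R ^ 2 * (gcirc (x1 / R) - gcirc (x0 / R)))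
      ≤ R * √((x1 - x0) ^ 2 + dy ^ 2) := by
  set l := √((x1 - x0) ^ 2 + dy ^ 2) with hl
  have hl2 : l ^ 2 = (x1 - x0) ^ 2 + dy ^ 2 := by rw [hl, Real.sq_sqrt (by positivity)]
  let φ : ℝ → ℝ := fun s => R * l * s - ((x0 * s + (x1 - x0) * s ^ 2 / 2) * dy
    + e * (R ^ 2 * gcirc ((x0 + s * (x1 - x0)) / R)))
  have hd : ∀ s, HasDerivAt φ (R * l - ((x0 + s * (x1 - x0)) * dy
    + e * (R ^ 2 * (√(1 - ((x0 + s * (x1 - x0)) / R) ^ 2) * ((x1 - x0) / R))))) s := by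
    intro s
    have hin : HasDerivAt (fun s : ℝ => (x0 + s * (x1 - x0)) / R) ((x1 - x0) / R) s := by
      have := (((hasDerivAt_id s).mul_const (x1 - x0)).const_add x0).div_const R
      simpa using this
    have hg := (gcirc_hasDerivAt ((x0 + s * (x1 - x0)) / R)).comp s hin
    have h1 : HasDerivAt (fun s : ℝ => R * l * s) (R * l) s := by
      simpa using (hasDerivAt_id s).const_mul (R * l)
    have h2 : HasDerivAt (fun s : ℝ => (x0 * s + (x1 - x0) * s ^ 2 / 2) * dy)
        ((x0 + s * (x1 - x0)) * dy) s := by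
      have a1 := (hasDerivAt_id s).const_mul x0
      have a2 := (((hasDerivAt_id s).pow 2).const_mul (x1 - x0)).div_const 2
      have := (a1.add a2).mul_const dy
      refine this.congr_deriv ?_
      simp only [id, Nat.cast_ofNat, Nat.add_one_sub_one, pow_one, mul_one]; ring
    exact h1.sub (h2.add ((hg.const_mul (R ^ 2)).const_mul e))
  have hmono : MonotoneOn φ (Set.Icc 0 1) := by
    apply monotoneOn_of_deriv_nonneg (convex_Icc _ _)
    · exact fun s _ => (hd s).continuousAt.continuousWithinAt
    · exact fun s _ => (hd s).differentiableAt.differentiableWithinAt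
    · intro s hs
      rw [interior_Icc] at hs
      rw [(hd s).deriv]
      have hx : |x0 + s * (x1 - x0)| ≤ R := by
        rw [abs_le] at *
        constructor <;> nlinarith [hs.1, hs.2]
      set X := x0 + s * (x1 - x0)
      have hX : (X / R) ^ 2 ≤ 1 := by
        rw [div_pow, div_le_one (by positivity)]; exact sq_le_sq' (abs_le.1 hx).1 (abs_le.1 hx).2
      have hw : (√(1 - (X / R) ^ 2)) ^ 2 = 1 - (X / R) ^ 2 := Real.sq_sqrt (by linarith)
      set w := √(1 - (X / R) ^ 2)
      have := cs2 X (e * (R * w)) dy (x1 - x0) R l hR.le (Real.sqrt_nonneg _) (by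
        rw [mul_pow, mul_pow, he, hw]; field_simp; linarith) (by rw [hl2]; linarith)
      have e2 : e * (R ^ 2 * (w * ((x1 - x0) / R))) = e * (R * w) * (x1 - x0) := by
        field_simp
      rw [e2]; linarith
  have := hmono (by simp : (0:ℝ) ∈ Set.Icc (0:ℝ) 1) (by simp : (1:ℝ) ∈ Set.Icc (0:ℝ) 1) zero_le_one
  simp only [φ] at this
  simp at this
  linarith

lemma polygon_shift (n m : ℕ) (hmn : m ≤ n) (x y : ℕ → ℝ) (hx : x n = x 0) (R : ℝ)
    (hR : 0 < R) (h0 : x 0 = -R) (hm : x m = R) (hb : ∀ k, |x k| ≤ R) :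
    (∑ k ∈ Finset.range n, (x k + x (k+1)) / 2 * (y (k+1) - y k)) + π * R ^ 2 ≤
      R * ∑ k ∈ Finset.range n, √((x (k+1) - x k) ^ 2 + (y (k+1) - y k) ^ 2) := by
  have key : ∑ k ∈ Finset.range n, ((x k + x (k+1)) / 2 * (y (k+1) - y k)
      + (if k < m then 1 else -1) * (R ^ 2 * (gcirc (x (k+1) / R) - gcirc (x k / R))))
      ≤ ∑ k ∈ Finset.range n, R * √((x (k+1) - x k) ^ 2 + (y (k+1) - y k) ^ 2) := by
    apply Finset.sum_le_sum
    intro k _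
    apply seg_ineq R _ _ _ _ hR (hb _) (hb _)
    split_ifs <;> norm_num
  rw [Finset.sum_add_distrib, ← Finset.mul_sum] at key
  have : ∑ k ∈ Finset.range n, (if k < m then (1:ℝ) else -1) *
      (R ^ 2 * (gcirc (x (k+1) / R) - gcirc (x k / R))) = π * R ^ 2 := by
    obtain ⟨d, rfl⟩ := Nat.exists_eq_add_of_le hmn
    rw [Finset.sum_range_add]
    have e1 : ∑ k ∈ Finset.range m, (if k < m then (1:ℝ) else -1) *
      (R ^ 2 * (gcirc (x (k+1) / R) - gcirc (x k / R))) =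
      R ^ 2 * (gcirc (x m / R) - gcirc (x 0 / R)) := by
      rw [← Finset.sum_range_sub (fun k => gcirc (x k / R)), Finset.mul_sum]
      apply Finset.sum_congr rfl
      intro k hk
      rw [if_pos (Finset.mem_range.1 hk), one_mul]
    have e2 : ∑ k ∈ Finset.range d, (if m + k < m then (1:ℝ) else -1) *
      (R ^ 2 * (gcirc (x (m + k+1) / R) - gcirc (x (m + k) / R))) =
      - (R ^ 2 * (gcirc (x (m + d) / R) - gcirc (x (m + 0) / R))) := by
      rw [← Finset.sum_range_sub (fun k => gcirc (x (m + k) / R)), Finset.mul_sum,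
        ← Finset.sum_neg_distrib]
      apply Finset.sum_congr rfl
      intro k hk
      rw [if_neg (by omega), neg_one_mul, add_assoc]
    rw [e1, e2, hx, add_zero, h0, hm, neg_div, div_self hR.ne']
    linear_combination 2 * R ^ 2 * gcirc_diff
  rw [this] at key
  exact key

lemma polygon (n m : ℕ) (hmn : m ≤ n) (x y : ℕ → ℝ) (hx : x n = x 0) (hy : y n = y 0)
    (h0 : ∀ k, x 0 ≤ x k) (hm : ∀ k, x k ≤ x m) :
    4 * π * (∑ k ∈ Finset.range n, (x k + x (k+1)) / 2 * (y (k+1) - y k)) ≤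
      (∑ k ∈ Finset.range n, √((x (k+1) - x k) ^ 2 + (y (k+1) - y k) ^ 2)) ^ 2 := by
  have htel : ∑ k ∈ Finset.range n, (y (k+1) - y k) = 0 := by
    rw [Finset.sum_range_sub, hy, sub_self]
  rcases (h0 m).eq_or_lt with h | h
  · have hc : ∀ k, x k = x 0 := fun k => le_antisymm (by rw [h]; exact hm k) (h0 k)
    have : ∑ k ∈ Finset.range n, (x k + x (k+1)) / 2 * (y (k+1) - y k) = 0 := by
      have : ∀ k ∈ Finset.range n, (x k + x (k+1)) / 2 * (y (k+1) - y k)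
        = x 0 * (y (k+1) - y k) := by
        intro k _; rw [hc k, hc (k+1)]; ring
      rw [Finset.sum_congr rfl this, ← Finset.mul_sum, htel, mul_zero]
    rw [this, mul_zero]; positivity
  · set c := (x 0 + x m) / 2 with hc
    have hs := polygon_shift n m hmn (fun k => x k - c) y (by simp [hx]) ((x m - x 0) / 2)
      (by linarith) (by simp only [hc]; ring) (by simp only [hc]; ring) (by
        intro k; rw [abs_le]; simp only [hc]; constructor <;> linarith [h0 k, hm k])
    set R := (x m - x 0) / 2
    have hR : 0 < R := by simp only [R]; linarith
    have e1 : ∑ k ∈ Finset.range n, (x k - c + (x (k+1) - c)) / 2 * (y (k+1) - y k)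
      = ∑ k ∈ Finset.range n, (x k + x (k+1)) / 2 * (y (k+1) - y k) := by
      have : ∀ k ∈ Finset.range n, (x k - c + (x (k+1) - c)) / 2 * (y (k+1) - y k)
        = (x k + x (k+1)) / 2 * (y (k+1) - y k) - c * (y (k+1) - y k) := by
        intro k _; ring
      rw [Finset.sum_congr rfl this, Finset.sum_sub_distrib, ← Finset.mul_sum, htel]; ring
    simp only [sub_sub_sub_cancel_right] at hs
    rw [e1] at hs
    set A := ∑ k ∈ Finset.range n, (x k + x (k+1)) / 2 * (y (k+1) - y k)
    set L := ∑ k ∈ Finset.range n, √((x (k+1) - x k) ^ 2 + (y (k+1) - y k) ^ 2)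
    have hπ := Real.pi_pos
    rcases le_or_gt A 0 with hA | hA
    · have : 4 * π * A ≤ 0 := by nlinarith
      exact this.trans (sq_nonneg _)
    · have h1 : (A + π * R ^ 2) ^ 2 ≤ (R * L) ^ 2 := by
        apply pow_le_pow_left₀ _ hs; positivity
      have h2 : R ^ 2 * (4 * π * A) ≤ R ^ 2 * L ^ 2 := by nlinarith [sq_nonneg (A - π * R ^ 2)]
      exact le_of_mul_le_mul_left h2 (by positivity)

noncomputable def trap (x0 y0 x1 y1 : ℝ) : ℝ := (x0 + x1) / 2 * (y1 - y0)

lemma perm_iso_one {F : Type*} [Fintype F] (x y : F → ℝ) (σ : Equiv.Perm F) :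
    4 * π * (∑ f, (x f + x (σ f)) / 2 * (y (σ f) - y f)) ≤
      (∑ f, √((x (σ f) - x f) ^ 2 + (y (σ f) - y f) ^ 2)) ^ 2 := by
  classical
  have hL : ∀ τ : Equiv.Perm F, 0 ≤ ∑ f, √((x (τ f) - x f) ^ 2 + (y (τ f) - y f) ^ 2) :=
    fun τ => Finset.sum_nonneg fun _ _ => Real.sqrt_nonneg _
  induction σ using Equiv.Perm.cycle_induction_on with
  | base_one => simp
  | base_cycles σ hσ =>
    have hon := hσ.isCycleOn
    have hset : {x | σ x ≠ x} = (σ.support : Set F) := by ext; simp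
    rw [hset] at hon
    have hne : σ.support.Nonempty := hσ.nonempty_support
    obtain ⟨a, ha, hamin⟩ := σ.support.exists_min_image x hne
    obtain ⟨b, hb, hbmax⟩ := σ.support.exists_max_image x hne
    obtain ⟨m, hm, hmb⟩ := hon.exists_pow_eq ha hb
    have hmem : ∀ k : ℕ, (σ ^ k) a ∈ σ.support := fun k => by
      rw [Equiv.Perm.pow_apply_mem_support]; exact ha
    have hsum : ∀ h : F → ℝ, (∀ f, σ f = f → h f = 0) →
        ∑ f, h f = ∑ k ∈ Finset.range σ.support.card, h ((σ ^ k) a) := by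
      intro h hh
      rw [← Finset.sum_subset (Finset.subset_univ σ.support)
        (fun f _ hf => hh f (by simpa using hf))]
      symm
      refine Finset.sum_bij (fun k _ => (σ ^ k) a) (fun k _ => hmem k) ?_ ?_ (fun _ _ => rfl)
      · intro i hi j hj hij
        have := (hon.pow_apply_eq_pow_apply ha).1 hij
        exact Nat.ModEq.eq_of_lt_of_lt this (Finset.mem_range.1 hi) (Finset.mem_range.1 hj)
      · intro c hc
        obtain ⟨k, hk, hkc⟩ := hon.exists_pow_eq ha hc
        exact ⟨k, Finset.mem_range.2 hk, hkc⟩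
    have hc := hon.pow_card_apply ha
    have := polygon σ.support.card m hm.le (fun k => x ((σ ^ k) a)) (fun k => y ((σ ^ k) a))
      (by simp [hc]) (by simp [hc]) (fun k => by simpa using hamin _ (hmem k))
      (fun k => by simpa [hmb] using hbmax _ (hmem k))
    rw [hsum _ (fun f hf => by simp [hf]), hsum _ (fun f hf => by simp [hf])]
    simpa only [pow_succ', Equiv.Perm.mul_apply] using this
  | induction_disjoint σ τ hd _ ih1 ih2 =>
    have hsplit : ∀ h : F → F → ℝ, (∀ f, h f f = 0) →
        ∑ f, h f ((σ * τ) f) = ∑ f, h f (σ f) + ∑ f, h f (τ f) := by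
      intro h hh
      rw [← Finset.sum_add_distrib]
      apply Finset.sum_congr rfl
      intro f _
      rcases hd f with h1 | h1
      · have : σ (τ f) = τ f := by
          have := hd.commute
          have h2 : (σ * τ) f = (τ * σ) f := by rw [this.eq]
          simpa [h1] using h2
        simp [this, h1, hh]
      · simp [h1, hh]
    rw [hsplit (fun f g => (x f + x g) / 2 * (y g - y f)) (by simp),
      hsplit (fun f g => √((x g - x f) ^ 2 + (y g - y f) ^ 2)) (by simp)]
    nlinarith [mul_nonneg (hL σ) (hL τ)]

lemma perm_iso {F : Type*} [Fintype F] (x y : F → ℝ) (σ : Equiv.Perm F) :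
    4 * π * |∑ f, trap (x f) (y f) (x (σ f)) (y (σ f))| ≤
      (∑ f, √((x (σ f) - x f) ^ 2 + (y (σ f) - y f) ^ 2)) ^ 2 := by
  unfold trap
  have h1 := perm_iso_one x y σ
  have h2 := perm_iso_one x (fun f => - y f) σ
  have e1 : ∑ f, (x f + x (σ f)) / 2 * (- y (σ f) - - y f) =
    - ∑ f, (x f + x (σ f)) / 2 * (y (σ f) - y f) := by
    rw [← Finset.sum_neg_distrib]; exact Finset.sum_congr rfl fun _ _ => by ring
  have e2 : ∀ f, (- y (σ f) - - y f) ^ 2 = (y (σ f) - y f) ^ 2 := fun f => by ring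
  simp only [e1, e2] at h2
  rcases abs_cases (∑ f, (x f + x (σ f)) / 2 * (y (σ f) - y f)) with h | h <;> rw [h.1] <;>
    assumption

lemma int_sqrt_one_sub (M : ℝ) (hM : 0 < M) : ∫ y in (0:ℝ)..M, √(1 - |y| / M) = 2 / 3 * M := by
  have h1 : ∫ y in (0:ℝ)..M, √(1 - |y| / M) = ∫ y in (0:ℝ)..M, √(1 - y / M) := by
    apply intervalIntegral.integral_congr
    intro y hy
    rw [Set.uIcc_of_le hM.le] at hy
    simp only [abs_of_nonneg hy.1]
  have h2 : ∫ x in (0:ℝ)..1, √x = 2 / 3 := by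
    simp only [Real.sqrt_eq_rpow]
    rw [integral_rpow (by norm_num)]
    norm_num
  rw [h1, intervalIntegral.integral_comp_sub_div (fun x => √x) hM.ne', div_self hM.ne']
  simp [h2]; ring

lemma oneD_pos (K : ℝ) (A B g : ℝ → ℝ) (hA : ∀ t, HasDerivAt A (B t) t)
    (hB : Continuous B) (hg : Continuous g) (h0 : A (-K) = 0) (h1 : A K = 0)
    (hineq : ∀ t, ∀ c s : ℝ, 0 ≤ c → c ^ 2 + s ^ 2 ≤ 1 → c * √(4 * π * |A t|) + s * B t ≤ g t)
    (t0 : ℝ) (ht0 : t0 ∈ Set.Icc (-K) K) (hmax : ∀ t ∈ Set.Icc (-K) K, |A t| ≤ A t0)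
    (hpos : 0 < A t0) :
    36 * π * (∫ t in (-K)..K, A t) ^ 2 ≤ (∫ t in (-K)..K, g t) ^ 3 := by
  have hAc : Continuous A := continuous_iff_continuousAt.2 fun t => (hA t).continuousAt
  have hKK : -K ≤ K := ht0.1.trans ht0.2
  set M := A t0 with hM
  have hpt : ∀ e : ℝ, e ^ 2 = 1 → ∀ t ∈ Set.Icc (-K) K,
      √(4 * π / M) * |A t| + e * (√(1 - |A t| / M) * B t) ≤ g t := by
    intro e he t ht
    have hq : |A t| / M ≤ 1 := (div_le_one hpos).2 (hmax t ht)
    have hq0 : 0 ≤ |A t| / M := by positivity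
    have := hineq t (√(|A t| / M)) (e * √(1 - |A t| / M)) (Real.sqrt_nonneg _) (by
      rw [mul_pow, he, Real.sq_sqrt hq0, Real.sq_sqrt (by linarith)]; linarith)
    have e1 : √(|A t| / M) * √(4 * π * |A t|) = √(4 * π / M) * |A t| := by
      rw [← Real.sqrt_mul hq0, show |A t| / M * (4 * π * |A t|) = 4 * π / M * |A t| ^ 2 by ring,
        Real.sqrt_mul (by positivity), Real.sqrt_sq (abs_nonneg _)]
    rw [e1] at this
    linarith
  have hcont : Continuous fun t => √(1 - |A t| / M) * B t := by fun_prop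
  have hcont2 : ∀ e : ℝ, Continuous fun t =>
    √(4 * π / M) * |A t| + e * (√(1 - |A t| / M) * B t) := by intro e; fun_prop
  have hcont3 : Continuous fun t => |A t| := by fun_prop
  have hsub : ∀ a b, ∫ t in a..b, √(1 - |A t| / M) * B t = ∫ y in (A a)..(A b), √(1 - |y| / M) := by
    intro a b
    exact intervalIntegral.integral_comp_mul_deriv (f := A) (f' := B)
      (g := fun y => √(1 - |y| / M)) (fun t _ => hA t) hB.continuousOn (by fun_prop)
  have hL : √(4 * π / M) * (∫ t in (-K)..t0, |A t|) + 2 / 3 * M ≤ ∫ t in (-K)..t0, g t := by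
    have := intervalIntegral.integral_mono_on (μ := volume) ht0.1 ((hcont2 1).intervalIntegrable _ _)
      (hg.intervalIntegrable _ _) (fun t ht => hpt 1 (by norm_num) t ⟨ht.1, ht.2.trans ht0.2⟩)
    rw [intervalIntegral.integral_add ((hcont3.const_mul _).intervalIntegrable (μ := volume) _ _)
      ((hcont.const_mul _).intervalIntegrable (μ := volume) _ _), intervalIntegral.integral_const_mul,
      intervalIntegral.integral_const_mul, hsub, h0, ← hM, int_sqrt_one_sub M hpos] at this
    linarith
  have hR : √(4 * π / M) * (∫ t in t0..K, |A t|) + 2 / 3 * M ≤ ∫ t in t0..K, g t := by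
    have := intervalIntegral.integral_mono_on (μ := volume) ht0.2 ((hcont2 (-1)).intervalIntegrable _ _)
      (hg.intervalIntegrable _ _) (fun t ht => hpt (-1) (by norm_num) t ⟨ht0.1.trans ht.1, ht.2⟩)
    rw [intervalIntegral.integral_add ((hcont3.const_mul _).intervalIntegrable (μ := volume) _ _)
      ((hcont.const_mul _).intervalIntegrable (μ := volume) _ _), intervalIntegral.integral_const_mul,
      intervalIntegral.integral_const_mul, hsub, h1, ← hM, intervalIntegral.integral_symm (0:ℝ) M,
      int_sqrt_one_sub M hpos] at this
    linarith
  have hs1 := intervalIntegral.integral_add_adjacent_intervals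
    (hcont3.intervalIntegrable (μ := volume) (-K) t0) (hcont3.intervalIntegrable t0 K)
  have hs2 := intervalIntegral.integral_add_adjacent_intervals
    (hg.intervalIntegrable (μ := volume) (-K) t0) (hg.intervalIntegrable t0 K)
  have hW : |∫ t in (-K)..K, A t| ≤ ∫ t in (-K)..K, |A t| :=
    intervalIntegral.abs_integral_le_integral_abs hKK
  set I := ∫ t in (-K)..K, |A t|
  set G := ∫ t in (-K)..K, g t
  set W := ∫ t in (-K)..K, A t
  have hG : √(4 * π / M) * I + 4 / 3 * M ≤ G := by rw [← hs1, ← hs2]; linarith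
  have hI : 0 ≤ I := (abs_nonneg _).trans hW
  have hk : √(4 * π / M) ^ 2 * M = 4 * π := by
    rw [Real.sq_sqrt (by positivity)]; field_simp
  have hk0 := Real.sqrt_nonneg (4 * π / M)
  set k := √(4 * π / M)
  have hW2 : W ^ 2 ≤ I ^ 2 := by
    rw [← sq_abs W]; exact pow_le_pow_left₀ (abs_nonneg _) hW 2
  have hG3 : (k * I + 4 / 3 * M) ^ 3 ≤ G ^ 3 := pow_le_pow_left₀ (by positivity) hG 3
  have amgm : 27 * (k * I / 2) ^ 2 * (4 / 3 * M) ≤ (k * I + 4 / 3 * M) ^ 3 := by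
    have hp : 0 ≤ k * I / 2 := by positivity
    have hq : 0 ≤ 4 / 3 * M := by positivity
    generalize 4 / 3 * M = q at *
    have : k * I = 2 * (k * I / 2) := by ring
    rw [this]
    generalize k * I / 2 = p at *
    have : (2 * p + q) ^ 3 - 27 * p ^ 2 * q = (p - q) ^ 2 * (8 * p + q) := by ring
    have : 0 ≤ (p - q) ^ 2 * (8 * p + q) := by positivity
    have e : 2 * (2 * p / 2) = 2 * p := by ring
    nlinarith
  have e1 : 27 * (k * I / 2) ^ 2 * (4 / 3 * M) = 36 * π * I ^ 2 := by
    linear_combination 9 * I ^ 2 * hk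
  have := mul_le_mul_of_nonneg_left hW2 (by positivity : 0 ≤ 36 * π)
  linarith

lemma oneD (K : ℝ) (hK : 0 ≤ K) (A B g : ℝ → ℝ) (hA : ∀ t, HasDerivAt A (B t) t)
    (hB : Continuous B) (hg : Continuous g) (h0 : A (-K) = 0) (h1 : A K = 0)
    (hineq : ∀ t, ∀ c s : ℝ, 0 ≤ c → c ^ 2 + s ^ 2 ≤ 1 → c * √(4 * π * |A t|) + s * B t ≤ g t) :
    36 * π * (∫ t in (-K)..K, A t) ^ 2 ≤ (∫ t in (-K)..K, g t) ^ 3 := by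
  have hAc : Continuous A := continuous_iff_continuousAt.2 fun t => (hA t).continuousAt
  have hKK : -K ≤ K := by linarith
  obtain ⟨t0, ht0, hmax⟩ := isCompact_Icc.exists_isMaxOn (Set.nonempty_Icc.2 hKK)
    (hAc.abs.continuousOn)
  have hmax' : ∀ t ∈ Set.Icc (-K) K, |A t| ≤ |A t0| := fun t ht => hmax ht
  rcases lt_trichotomy (A t0) 0 with h | h | h
  · have := oneD_pos K (fun t => - A t) (fun t => - B t) g (fun t => (hA t).neg) hB.neg hg
      (by simp [h0]) (by simp [h1]) (fun t c s hc hcs => by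
        have := hineq t c (-s) hc (by simpa using hcs)
        simp only [abs_neg]; linarith) t0 ht0
      (fun t ht => by simpa [abs_of_neg h] using hmax' t ht) (by linarith)
    simpa using this
  · have hz : ∫ t in (-K)..K, A t = 0 := by
      rw [intervalIntegral.integral_congr (g := fun _ => 0), intervalIntegral.integral_zero]
      intro t ht
      rw [Set.uIcc_of_le hKK] at ht
      have := hmax' t ht
      rw [h, abs_zero] at this
      exact abs_nonpos_iff.1 this
    have hgn : 0 ≤ ∫ t in (-K)..K, g t := by
      apply intervalIntegral.integral_nonneg hKK
      intro t _
      simpa using hineq t 0 0 le_rfl (by norm_num)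
    rw [hz]; simp; positivity
  · exact oneD_pos K A B g hA hB hg h0 h1 hineq t0 ht0
      (fun t ht => by simpa [abs_of_pos h] using hmax' t ht) h

noncomputable def pp (z t : ℝ) : ℝ := max (t - z) 0
noncomputable def rr (z0 z1 z2 : ℝ) : ℝ := 1 / ((z0 - z1) * (z0 - z2))
noncomputable def lam (z0 z1 z2 t : ℝ) : ℝ :=
  rr z0 z1 z2 * pp z0 t + rr z1 z2 z0 * pp z1 t + rr z2 z0 z1 * pp z2 t
noncomputable def Lam (z0 z1 z2 t : ℝ) : ℝ :=
  rr z0 z1 z2 * (pp z0 t ^ 2 / 2) + rr z1 z2 z0 * (pp z1 t ^ 2 / 2) + rr z2 z0 z1 * (pp z2 t ^ 2 / 2)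
noncomputable def LLam (z0 z1 z2 t : ℝ) : ℝ :=
  rr z0 z1 z2 * (pp z0 t ^ 3 / 6) + rr z1 z2 z0 * (pp z1 t ^ 3 / 6) + rr z2 z0 z1 * (pp z2 t ^ 3 / 6)

lemma max_pow_hasDerivAt (n : ℕ) (x : ℝ) :
    HasDerivAt (fun x : ℝ => (max x 0) ^ (n + 2)) ((n + 2 : ℕ) * (max x 0) ^ (n + 1)) x := by
  have hne : ∀ y : ℝ, y ≠ 0 →
      HasDerivAt (fun x : ℝ => (max x 0) ^ (n + 2)) ((n + 2 : ℕ) * (max y 0) ^ (n + 1)) y := by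
    intro y hy
    rcases lt_or_gt_of_ne hy with h | h
    · have : (fun x : ℝ => (max x 0) ^ (n + 2)) =ᶠ[nhds y] fun _ => 0 := by
        filter_upwards [gt_mem_nhds h] with x hx
        rw [max_eq_right hx.le]; simp
      rw [max_eq_right h.le]
      simpa using (hasDerivAt_const y (0:ℝ)).congr_of_eventuallyEq this
    · have : (fun x : ℝ => (max x 0) ^ (n + 2)) =ᶠ[nhds y] fun x => x ^ (n + 2) := by
        filter_upwards [lt_mem_nhds h] with x hx
        rw [max_eq_left hx.le]
      rw [max_eq_left h.le]
      exact (hasDerivAt_pow (n + 2) y).congr_of_eventuallyEq this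
  by_cases hx : x = 0
  · subst hx
    exact hasDerivAt_of_hasDerivAt_of_ne hne (by fun_prop) (by fun_prop)
  · exact hne x hx

lemma pp2_hasDerivAt (z t : ℝ) : HasDerivAt (fun t => pp z t ^ 2 / 2) (pp z t) t := by
  have h := ((max_pow_hasDerivAt 0 (t - z)).comp t ((hasDerivAt_id t).sub_const z)).div_const 2
  refine h.congr_deriv ?_
  simp [pp]

lemma pp3_hasDerivAt (z t : ℝ) : HasDerivAt (fun t => pp z t ^ 3 / 6) (pp z t ^ 2 / 2) t := by
  have h := ((max_pow_hasDerivAt 1 (t - z)).comp t ((hasDerivAt_id t).sub_const z)).div_const 6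
  refine h.congr_deriv ?_
  simp [pp]; ring

lemma Lam_hasDerivAt (z0 z1 z2 t : ℝ) : HasDerivAt (Lam z0 z1 z2) (lam z0 z1 z2 t) t :=
  (((pp2_hasDerivAt z0 t).const_mul _).add ((pp2_hasDerivAt z1 t).const_mul _)).add
    ((pp2_hasDerivAt z2 t).const_mul _)

lemma LLam_hasDerivAt (z0 z1 z2 t : ℝ) : HasDerivAt (LLam z0 z1 z2) (Lam z0 z1 z2 t) t :=
  (((pp3_hasDerivAt z0 t).const_mul _).add ((pp3_hasDerivAt z1 t).const_mul _)).add
    ((pp3_hasDerivAt z2 t).const_mul _)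

lemma lam_continuous (z0 z1 z2 : ℝ) : Continuous (lam z0 z1 z2) := by
  unfold lam pp; fun_prop

lemma Lam_continuous (z0 z1 z2 : ℝ) : Continuous (Lam z0 z1 z2) := by
  unfold Lam pp; fun_prop

lemma pp_of_lt {z t : ℝ} (h : z < t) : pp z t = t - z := max_eq_left (by linarith)
lemma pp_of_ge {z t : ℝ} (h : t ≤ z) : pp z t = 0 := max_eq_right (by linarith)

lemma lam_cyc (z0 z1 z2 t : ℝ) : lam z1 z2 z0 t = lam z0 z1 z2 t := by unfold lam; ring
lemma Lam_cyc (z0 z1 z2 t : ℝ) : Lam z1 z2 z0 t = Lam z0 z1 z2 t := by unfold Lam; ring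

lemma Lam_below {z0 z1 z2 t : ℝ} (h0 : t ≤ z0) (h1 : t ≤ z1) (h2 : t ≤ z2) :
    Lam z0 z1 z2 t = 0 := by simp [Lam, pp_of_ge, h0, h1, h2]
lemma lam_below {z0 z1 z2 t : ℝ} (h0 : t ≤ z0) (h1 : t ≤ z1) (h2 : t ≤ z2) :
    lam z0 z1 z2 t = 0 := by simp [lam, pp_of_ge, h0, h1, h2]
lemma LLam_below {z0 z1 z2 t : ℝ} (h0 : t ≤ z0) (h1 : t ≤ z1) (h2 : t ≤ z2) :
    LLam z0 z1 z2 t = 0 := by simp [LLam, pp_of_ge, h0, h1, h2]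

lemma lam_above {z0 z1 z2 t : ℝ} (h01 : z0 ≠ z1) (h12 : z1 ≠ z2) (h20 : z2 ≠ z0)
    (h0 : z0 < t) (h1 : z1 < t) (h2 : z2 < t) : lam z0 z1 z2 t = 0 := by
  have a := sub_ne_zero.2 h01
  have b := sub_ne_zero.2 h12
  have c := sub_ne_zero.2 h20
  simp only [lam, rr, pp_of_lt, h0, h1, h2, ← neg_sub z0 z1, ← neg_sub z1 z2, ← neg_sub z2 z0]
  field_simp
  ring

lemma Lam_above {z0 z1 z2 t : ℝ} (h01 : z0 ≠ z1) (h12 : z1 ≠ z2) (h20 : z2 ≠ z0)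
    (h0 : z0 < t) (h1 : z1 < t) (h2 : z2 < t) : Lam z0 z1 z2 t = 1 / 2 := by
  have a := sub_ne_zero.2 h01
  have b := sub_ne_zero.2 h12
  have c := sub_ne_zero.2 h20
  simp only [Lam, rr, pp_of_lt, h0, h1, h2, ← neg_sub z0 z1, ← neg_sub z1 z2, ← neg_sub z2 z0]
  field_simp
  ring

lemma LLam_above {z0 z1 z2 t : ℝ} (h01 : z0 ≠ z1) (h12 : z1 ≠ z2) (h20 : z2 ≠ z0)
    (h0 : z0 < t) (h1 : z1 < t) (h2 : z2 < t) :
    LLam z0 z1 z2 t = (3 * t - (z0 + z1 + z2)) / 6 := by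
  have a := sub_ne_zero.2 h01
  have b := sub_ne_zero.2 h12
  have c := sub_ne_zero.2 h20
  simp only [LLam, rr, pp_of_lt, h0, h1, h2, ← neg_sub z0 z1, ← neg_sub z1 z2, ← neg_sub z2 z0]
  field_simp
  ring

noncomputable def qc (a0 a1 z0 z1 t : ℝ) : ℝ := a0 + (t - z0) / (z1 - z0) * (a1 - a0)

lemma qc_symm (a0 a1 z0 z1 t : ℝ) (h : z0 ≠ z1) : qc a1 a0 z1 z0 t = qc a0 a1 z0 z1 t := by
  have a := sub_ne_zero.2 h
  unfold qc
  rw [← neg_sub z0 z1]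
  field_simp
  ring

noncomputable def exq (a0 a1 a2 z0 z1 z2 t : ℝ) : ℝ :=
  if z2 < t then qc a1 a2 z1 z2 t else qc a2 a0 z2 z0 t

lemma lam_up {z0 z1 z2 t : ℝ} (h01 : z0 ≠ z1) (h12 : z1 ≠ z2) (h20 : z2 ≠ z0)
    (h0 : z0 < t) (h1 : t ≤ z1) : lam z0 z1 z2 t =
      if z2 < t then (z1 - t) / ((z1 - z0) * (z1 - z2)) else (t - z0) / ((z1 - z0) * (z2 - z0)) := by
  have a := sub_ne_zero.2 h01
  have b := sub_ne_zero.2 h12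
  have c := sub_ne_zero.2 h20
  split_ifs with h2
  · simp only [lam, rr, pp_of_lt h0, pp_of_ge h1, pp_of_lt h2, ← neg_sub z0 z1, ← neg_sub z1 z2,
      ← neg_sub z2 z0]
    field_simp
    ring
  · simp only [lam, rr, pp_of_lt h0, pp_of_ge h1, pp_of_ge (not_lt.1 h2), ← neg_sub z0 z1,
      ← neg_sub z1 z2, ← neg_sub z2 z0]
    field_simp
    ring

lemma lam_up_nonneg {z0 z1 z2 t : ℝ} (h01 : z0 ≠ z1) (h12 : z1 ≠ z2) (h20 : z2 ≠ z0)
    (h0 : z0 < t) (h1 : t ≤ z1) : 0 ≤ lam z0 z1 z2 t := by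
  rw [lam_up h01 h12 h20 h0 h1]
  split_ifs with h2
  · apply div_nonneg (by linarith); apply mul_nonneg <;> linarith
  · apply div_nonneg (by linarith); apply mul_nonneg <;> linarith

lemma exq_sub {a0 a1 a2 z0 z1 z2 t : ℝ} (h01 : z0 ≠ z1) (h12 : z1 ≠ z2) (h20 : z2 ≠ z0)
    (h0 : z0 < t) (h1 : t ≤ z1) :
    exq a0 a1 a2 z0 z1 z2 t - qc a0 a1 z0 z1 t =
      lam z0 z1 z2 t * ((z1 - z0) * (a2 - a0) - (a1 - a0) * (z2 - z0)) := by
  have a := sub_ne_zero.2 h01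
  have b := sub_ne_zero.2 h12
  have c := sub_ne_zero.2 h20
  rw [lam_up h01 h12 h20 h0 h1]
  unfold exq qc
  rw [← neg_sub z0 z1, ← neg_sub z1 z2, ← neg_sub z2 z0]
  split_ifs with h2
  · field_simp; ring
  · field_simp; ring

noncomputable def bet (x0 y0 z0 x1 y1 z1 t : ℝ) : ℝ :=
  if z0 < t then (if z1 < t then trap x0 y0 x1 y1
    else trap x0 y0 (qc x0 x1 z0 z1 t) (qc y0 y1 z0 z1 t))
  else (if z1 < t then trap (qc x0 x1 z0 z1 t) (qc y0 y1 z0 z1 t) x1 y1 else 0)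

lemma bet_symm (x0 y0 z0 x1 y1 z1 t : ℝ) (h : z0 ≠ z1) :
    bet x1 y1 z1 x0 y0 z0 t = - bet x0 y0 z0 x1 y1 z1 t := by
  unfold bet
  rw [qc_symm x0 x1 z0 z1 t h, qc_symm y0 y1 z0 z1 t h]
  unfold trap
  split_ifs <;> ring

noncomputable def tau (x0 y0 z0 x1 y1 z1 x2 y2 z2 t : ℝ) : ℝ :=
  if z0 < t ∧ t ≤ z1 then trap (qc x0 x1 z0 z1 t) (qc y0 y1 z0 z1 t)
    (exq x0 x1 x2 z0 z1 z2 t) (exq y0 y1 y2 z0 z1 z2 t) else 0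

noncomputable def ell (x0 y0 z0 x1 y1 z1 x2 y2 z2 t : ℝ) : ℝ :=
  if z0 < t ∧ t ≤ z1 then √((exq x0 x1 x2 z0 z1 z2 t - qc x0 x1 z0 z1 t) ^ 2
    + (exq y0 y1 y2 z0 z1 z2 t - qc y0 y1 z0 z1 t) ^ 2) else 0

/-- planar cross product of edge vectors -/
def crs (x0 y0 x1 y1 x2 y2 : ℝ) : ℝ := (x1 - x0) * (y2 - y0) - (y1 - y0) * (x2 - x0)

lemma crs_cyc (x0 y0 x1 y1 x2 y2 : ℝ) : crs x1 y1 x2 y2 x0 y0 = crs x0 y0 x1 y1 x2 y2 := by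
  unfold crs; ring

lemma green_up {x0 y0 z0 x1 y1 z1 x2 y2 z2 t : ℝ} (h01 : z0 ≠ z1) (h12 : z1 ≠ z2) (h20 : z2 ≠ z0)
    (h0 : z0 < t) (h1 : t ≤ z1) :
    crs x0 y0 x1 y1 x2 y2 * Lam z0 z1 z2 t =
      bet x0 y0 z0 x1 y1 z1 t + bet x1 y1 z1 x2 y2 z2 t + bet x2 y2 z2 x0 y0 z0 t
      + tau x0 y0 z0 x1 y1 z1 x2 y2 z2 t := by
  have a := sub_ne_zero.2 h01
  have b := sub_ne_zero.2 h12
  have c := sub_ne_zero.2 h20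
  have h1' : ¬ z1 < t := not_lt.2 h1
  by_cases h2 : z2 < t
  · simp only [bet, tau, exq, h0, h1, h1', h2, if_true, if_false, and_self, Lam, rr, pp_of_lt h0,
      pp_of_ge h1, pp_of_lt h2, trap, qc, crs, ← neg_sub z0 z1, ← neg_sub z1 z2, ← neg_sub z2 z0]
    field_simp
    ring
  · simp only [bet, tau, exq, h0, h1, h1', h2, if_true, if_false, and_self, Lam, rr, pp_of_lt h0,
      pp_of_ge h1, pp_of_ge (not_lt.1 h2), trap, qc, crs, ← neg_sub z0 z1, ← neg_sub z1 z2,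
      ← neg_sub z2 z0]
    field_simp
    ring

lemma tau_not_up {x0 y0 z0 x1 y1 z1 x2 y2 z2 t : ℝ} (h : ¬ (z0 < t ∧ t ≤ z1)) :
    tau x0 y0 z0 x1 y1 z1 x2 y2 z2 t = 0 := if_neg h
lemma ell_not_up {x0 y0 z0 x1 y1 z1 x2 y2 z2 t : ℝ} (h : ¬ (z0 < t ∧ t ≤ z1)) :
    ell x0 y0 z0 x1 y1 z1 x2 y2 z2 t = 0 := if_neg h

lemma up_cases (z0 z1 z2 t : ℝ) : (t ≤ z0 ∧ t ≤ z1 ∧ t ≤ z2) ∨ (z0 < t ∧ z1 < t ∧ z2 < t) ∨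
    (z0 < t ∧ t ≤ z1) ∨ (z1 < t ∧ t ≤ z2) ∨ (z2 < t ∧ t ≤ z0) := by
  simp only [← not_lt]
  tauto

lemma green {x0 y0 z0 x1 y1 z1 x2 y2 z2 : ℝ} (t : ℝ)
    (h01 : z0 ≠ z1) (h12 : z1 ≠ z2) (h20 : z2 ≠ z0) :
    crs x0 y0 x1 y1 x2 y2 * Lam z0 z1 z2 t =
      bet x0 y0 z0 x1 y1 z1 t + bet x1 y1 z1 x2 y2 z2 t + bet x2 y2 z2 x0 y0 z0 t
      + (tau x0 y0 z0 x1 y1 z1 x2 y2 z2 t + tau x1 y1 z1 x2 y2 z2 x0 y0 z0 t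
      + tau x2 y2 z2 x0 y0 z0 x1 y1 z1 t) := by
  rcases up_cases z0 z1 z2 t with ⟨h0, h1, h2⟩ | ⟨h0, h1, h2⟩ | ⟨h0, h1⟩ | ⟨h0, h1⟩ | ⟨h0, h1⟩
  · rw [Lam_below h0 h1 h2, tau_not_up, tau_not_up, tau_not_up]
    · simp [bet, not_lt.2 h0, not_lt.2 h1, not_lt.2 h2]
    all_goals simp only [not_and]; intros; linarith
  · rw [Lam_above h01 h12 h20 h0 h1 h2, tau_not_up, tau_not_up, tau_not_up]
    · simp only [bet, h0, h1, h2, if_true, trap, crs]; ring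
    all_goals simp only [not_and, not_le]; intros; linarith
  · rw [green_up h01 h12 h20 h0 h1, tau_not_up (z0 := z1), tau_not_up (z0 := z2)]
    · ring
    all_goals simp only [not_and, not_le]; intros; linarith
  · rw [← crs_cyc, ← Lam_cyc, green_up h12 h20 h01 h0 h1, tau_not_up (z0 := z0),
      tau_not_up (z0 := z2)]
    · ring
    all_goals simp only [not_and, not_le]; intros; linarith
  · rw [← crs_cyc, ← crs_cyc, ← Lam_cyc, ← Lam_cyc, green_up h20 h01 h12 h0 h1,
      tau_not_up (z0 := z0), tau_not_up (z0 := z1)]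
    · ring
    all_goals simp only [not_and, not_le]; intros; linarith

lemma lam_nonneg {z0 z1 z2 : ℝ} (t : ℝ) (h01 : z0 ≠ z1) (h12 : z1 ≠ z2) (h20 : z2 ≠ z0) :
    0 ≤ lam z0 z1 z2 t := by
  rcases up_cases z0 z1 z2 t with ⟨h0, h1, h2⟩ | ⟨h0, h1, h2⟩ | ⟨h0, h1⟩ | ⟨h0, h1⟩ | ⟨h0, h1⟩
  · rw [lam_below h0 h1 h2]
  · rw [lam_above h01 h12 h20 h0 h1 h2]
  · exact lam_up_nonneg h01 h12 h20 h0 h1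
  · rw [← lam_cyc]; exact lam_up_nonneg h12 h20 h01 h0 h1
  · rw [← lam_cyc, ← lam_cyc]; exact lam_up_nonneg h20 h01 h12 h0 h1

/-- length of the horizontal part of the normal -/
noncomputable def nh (x0 y0 z0 x1 y1 z1 x2 y2 z2 : ℝ) : ℝ :=
  √(crs z0 x0 z1 x1 z2 x2 ^ 2 + crs y0 z0 y1 z1 y2 z2 ^ 2)

lemma nh_cyc (x0 y0 z0 x1 y1 z1 x2 y2 z2 : ℝ) :
    nh x1 y1 z1 x2 y2 z2 x0 y0 z0 = nh x0 y0 z0 x1 y1 z1 x2 y2 z2 := by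
  unfold nh; rw [crs_cyc z0 x0 z1 x1 z2 x2, crs_cyc y0 z0 y1 z1 y2 z2]

lemma ell_up {x0 y0 z0 x1 y1 z1 x2 y2 z2 t : ℝ} (h01 : z0 ≠ z1) (h12 : z1 ≠ z2) (h20 : z2 ≠ z0)
    (h0 : z0 < t) (h1 : t ≤ z1) :
    ell x0 y0 z0 x1 y1 z1 x2 y2 z2 t = lam z0 z1 z2 t * nh x0 y0 z0 x1 y1 z1 x2 y2 z2 := by
  rw [ell, if_pos ⟨h0, h1⟩, exq_sub h01 h12 h20 h0 h1, exq_sub h01 h12 h20 h0 h1, nh]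
  have hl := lam_up_nonneg h01 h12 h20 h0 h1
  rw [← Real.sqrt_sq hl, ← Real.sqrt_mul (sq_nonneg _), Real.sqrt_sq hl]
  congr 1
  unfold crs; ring

lemma len_tri {x0 y0 z0 x1 y1 z1 x2 y2 z2 : ℝ} (t : ℝ)
    (h01 : z0 ≠ z1) (h12 : z1 ≠ z2) (h20 : z2 ≠ z0) :
    lam z0 z1 z2 t * nh x0 y0 z0 x1 y1 z1 x2 y2 z2 =
      ell x0 y0 z0 x1 y1 z1 x2 y2 z2 t + ell x1 y1 z1 x2 y2 z2 x0 y0 z0 t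
      + ell x2 y2 z2 x0 y0 z0 x1 y1 z1 t := by
  rcases up_cases z0 z1 z2 t with ⟨h0, h1, h2⟩ | ⟨h0, h1, h2⟩ | ⟨h0, h1⟩ | ⟨h0, h1⟩ | ⟨h0, h1⟩
  · rw [lam_below h0 h1 h2, ell_not_up, ell_not_up, ell_not_up]
    · simp
    all_goals simp only [not_and]; intros; linarith
  · rw [lam_above h01 h12 h20 h0 h1 h2, ell_not_up, ell_not_up, ell_not_up]
    · simp
    all_goals simp only [not_and, not_le]; intros; linarith
  · rw [← ell_up h01 h12 h20 h0 h1, ell_not_up (z0 := z1), ell_not_up (z0 := z2)]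
    · ring
    all_goals simp only [not_and, not_le]; intros; linarith
  · rw [← nh_cyc, ← lam_cyc, ← ell_up h12 h20 h01 h0 h1, ell_not_up (z0 := z0),
      ell_not_up (z0 := z2)]
    · ring
    all_goals simp only [not_and, not_le]; intros; linarith
  · rw [← nh_cyc, ← nh_cyc, ← lam_cyc, ← lam_cyc, ← ell_up h20 h01 h12 h0 h1,
      ell_not_up (z0 := z0), ell_not_up (z0 := z1)]
    · ring
    all_goals simp only [not_and, not_le]; intros; linarith

/-- the permutation tracing the slice curve -/
noncomputable def sg {F : Type*} (n o : F → F) (z : F → ℝ) (t : ℝ) (f : F) : F :=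
  if z f < t ∧ t ≤ z (n f) then o (if z (n (n f)) < t then n f else n (n f)) else f

lemma sg_up {F : Type*} (n o : F → F) (z : F → ℝ) (hn : ∀ f, n (n (n f)) = f)
    (hz1 : ∀ f, z (o f) = z (n f)) (hz2 : ∀ f, z (n (o f)) = z f) (t : ℝ) (f : F)
    (h : z f < t ∧ t ≤ z (n f)) :
    z (sg n o z t f) < t ∧ t ≤ z (n (sg n o z t f)) := by
  unfold sg
  rw [if_pos h, hz1, hz2]
  split_ifs with h2
  · exact ⟨h2, h.2⟩
  · rw [hn]; exact ⟨h.1, not_lt.1 h2⟩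

lemma sg_inj {F : Type*} (n o : F → F) (z : F → ℝ) (hn : ∀ f, n (n (n f)) = f)
    (ho : ∀ f, o (o f) = f)
    (hz1 : ∀ f, z (o f) = z (n f)) (hz2 : ∀ f, z (n (o f)) = z f) (t : ℝ) :
    Function.Injective (sg n o z t) := by
  have ninj : Function.Injective n := fun a b h => by rw [← hn a, ← hn b, h]
  have oinj : Function.Injective o := fun a b h => by rw [← ho a, ← ho b, h]
  intro f g hfg
  by_cases hf : z f < t ∧ t ≤ z (n f) <;> by_cases hg : z g < t ∧ t ≤ z (n g)
  · unfold sg at hfg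
    rw [if_pos hf, if_pos hg] at hfg
    have h := oinj hfg
    split_ifs at h with h1 h2 h2
    · exact ninj h
    · have := ninj h
      rw [this] at hf
      exact absurd hf.1 (not_lt.2 hg.2)
    · have := ninj h
      rw [← this] at hg
      exact absurd hg.1 (not_lt.2 hf.2)
    · exact ninj (ninj h)
  · have := sg_up n o z hn hz1 hz2 t f hf
    rw [hfg] at this
    have e : sg n o z t g = g := by unfold sg; rw [if_neg hg]
    rw [e] at this; exact absurd this hg
  · have := sg_up n o z hn hz1 hz2 t g hg
    rw [← hfg] at this
    have e : sg n o z t f = f := by unfold sg; rw [if_neg hf]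
    rw [e] at this; exact absurd this hf
  · unfold sg at hfg
    rwa [if_neg hf, if_neg hg] at hfg

/-- Length of the (doubled) area vector. -/
noncomputable def nn3 (x0 y0 z0 x1 y1 z1 x2 y2 z2 : ℝ) : ℝ :=
  √(crs y0 z0 y1 z1 y2 z2 ^ 2 + crs z0 x0 z1 x1 z2 x2 ^ 2 + crs x0 y0 x1 y1 x2 y2 ^ 2)

def det3 (x0 y0 z0 x1 y1 z1 x2 y2 z2 : ℝ) : ℝ :=
  z0 * (x1 * y2 - y1 * x2) + z1 * (x2 * y0 - y2 * x0) + z2 * (x0 * y1 - y0 * x1)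

lemma nh_nn (x0 y0 z0 x1 y1 z1 x2 y2 z2 c s : ℝ) (hcs : c ^ 2 + s ^ 2 ≤ 1) :
    c * nh x0 y0 z0 x1 y1 z1 x2 y2 z2 + s * crs x0 y0 x1 y1 x2 y2
      ≤ nn3 x0 y0 z0 x1 y1 z1 x2 y2 z2 := by
  have := cs2 c s (nh x0 y0 z0 x1 y1 z1 x2 y2 z2) (crs x0 y0 x1 y1 x2 y2) 1
    (nn3 x0 y0 z0 x1 y1 z1 x2 y2 z2) zero_le_one (Real.sqrt_nonneg _) (by simpa using hcs) (by
      unfold nh nn3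
      rw [Real.sq_sqrt (by positivity), Real.sq_sqrt (by positivity)]
      linarith)
  linarith

theorem discrete_iso {F : Type*} [Fintype F] (n o : F → F) (x y z : F → ℝ)
    (hn : ∀ f, n (n (n f)) = f) (ho : ∀ f, o (o f) = f)
    (hx1 : ∀ f, x (o f) = x (n f)) (hx2 : ∀ f, x (n (o f)) = x f)
    (hy1 : ∀ f, y (o f) = y (n f)) (hy2 : ∀ f, y (n (o f)) = y f)
    (hz1 : ∀ f, z (o f) = z (n f)) (hz2 : ∀ f, z (n (o f)) = z f)
    (hd : ∀ f, z f ≠ z (n f)) :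
    36 * π * (1 / 18 * ∑ f, det3 (x f) (y f) (z f) (x (n f)) (y (n f)) (z (n f))
      (x (n (n f))) (y (n (n f))) (z (n (n f)))) ^ 2 ≤
    (1 / 6 * ∑ f, nn3 (x f) (y f) (z f) (x (n f)) (y (n f)) (z (n f))
      (x (n (n f))) (y (n (n f))) (z (n (n f)))) ^ 3 := by
  have ninj : Function.Injective n := fun a b h => by rw [← hn a, ← hn b, h]
  have oinj : Function.Injective o := fun a b h => by rw [← ho a, ← ho b, h]
  have nsum : ∀ h : F → ℝ, ∑ f, h (n f) = ∑ f, h f := fun h =>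
    (Finite.injective_iff_bijective.1 ninj).sum_comp h
  have nsum3 : ∀ h : F → ℝ, ∑ f, (h f + h (n f) + h (n (n f))) = 3 * ∑ f, h f := fun h => by
    rw [Finset.sum_add_distrib, Finset.sum_add_distrib, nsum (fun f => h (n f)), nsum h]; ring
  have osum : ∀ h : F → ℝ, (∀ f, h (o f) = - h f) → ∑ f, h f = 0 := fun h hh => by
    have := (Finite.injective_iff_bijective.1 oinj).sum_comp h
    simp only [hh, Finset.sum_neg_distrib] at this
    linarith
  have hd1 : ∀ f, z (n f) ≠ z (n (n f)) := fun f => hd (n f)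
  have hd2 : ∀ f, z (n (n f)) ≠ z f := fun f => by have := hd (n (n f)); rwa [hn] at this
  obtain ⟨K, hK0, hK⟩ : ∃ K : ℝ, 0 ≤ K ∧ ∀ f, |z f| < K := by
    refine ⟨∑ f, |z f| + 1, by positivity, fun f => ?_⟩
    have := Finset.single_le_sum (f := fun f => |z f|) (fun i _ => abs_nonneg _) (Finset.mem_univ f)
    linarith
  set N3 : F → ℝ := fun f => crs (x f) (y f) (x (n f)) (y (n f)) (x (n (n f))) (y (n (n f))) with hN3
  set NN : F → ℝ := fun f => nn3 (x f) (y f) (z f) (x (n f)) (y (n f)) (z (n f))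
      (x (n (n f))) (y (n (n f))) (z (n (n f))) with hNN
  set NH : F → ℝ := fun f => nh (x f) (y f) (z f) (x (n f)) (y (n f)) (z (n f))
      (x (n (n f))) (y (n (n f))) (z (n (n f))) with hNH
  set DD : F → ℝ := fun f => det3 (x f) (y f) (z f) (x (n f)) (y (n f)) (z (n f))
      (x (n (n f))) (y (n (n f))) (z (n (n f))) with hDD
  let la : F → ℝ → ℝ := fun f => lam (z f) (z (n f)) (z (n (n f)))
  let La : F → ℝ → ℝ := fun f => Lam (z f) (z (n f)) (z (n (n f)))
  let LLa : F → ℝ → ℝ := fun f => LLam (z f) (z (n f)) (z (n (n f)))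
  have hlow : ∀ f, -K ≤ z f := fun f => (abs_lt.1 (hK f)).1.le
  have hhigh : ∀ f, z f < K := fun f => (abs_lt.1 (hK f)).2
  have La_low : ∀ f, La f (-K) = 0 := fun f => Lam_below (hlow _) (hlow _) (hlow _)
  have La_high : ∀ f, La f K = 1 / 2 := fun f =>
    Lam_above (hd f) (hd1 f) (hd2 f) (hhigh _) (hhigh _) (hhigh _)
  have LLa_low : ∀ f, LLa f (-K) = 0 := fun f => LLam_below (hlow _) (hlow _) (hlow _)
  have LLa_high : ∀ f, LLa f K = (3 * K - (z f + z (n f) + z (n (n f)))) / 6 := fun f =>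
    LLam_above (hd f) (hd1 f) (hd2 f) (hhigh _) (hhigh _) (hhigh _)
  have int_la : ∀ f, ∫ t in (-K)..K, la f t = 1 / 2 := fun f => by
    rw [intervalIntegral.integral_eq_sub_of_hasDerivAt (f := La f)
      (fun t _ => Lam_hasDerivAt _ _ _ t) ((lam_continuous _ _ _).intervalIntegrable _ _),
      La_low, La_high, sub_zero]
  have int_La : ∀ f, ∫ t in (-K)..K, La f t = (3 * K - (z f + z (n f) + z (n (n f)))) / 6 :=
    fun f => by
    rw [intervalIntegral.integral_eq_sub_of_hasDerivAt (f := LLa f)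
      (fun t _ => LLam_hasDerivAt _ _ _ t) ((Lam_continuous _ _ _).intervalIntegrable _ _),
      LLa_low, LLa_high, sub_zero]
  have sumN3 : ∑ f, N3 f = 0 := by
    have h1 := nsum3 (fun f => 2 * trap (x f) (y f) (x (n f)) (y (n f)))
    rw [osum (fun f => 2 * trap (x f) (y f) (x (n f)) (y (n f))) (fun f => by
      simp only [hx1, hy1, hx2, hy2, trap]; ring)] at h1
    rw [mul_zero] at h1
    rw [← h1]
    apply Finset.sum_congr rfl
    intro f _
    simp only [hN3, hn, trap, crs]; ring
  have sumD : ∑ f, N3 f * (z f + z (n f) + z (n (n f))) = ∑ f, DD f := by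
    have h1 := nsum3 (fun f => (x f * y (n f) - y f * x (n f)) * (z f + z (n f)))
    rw [osum (fun f => (x f * y (n f) - y f * x (n f)) * (z f + z (n f))) (fun f => by
      simp only [hx1, hy1, hx2, hy2, hz1, hz2]; ring), mul_zero] at h1
    rw [← add_zero (∑ f, DD f), ← h1, ← Finset.sum_add_distrib]
    apply Finset.sum_congr rfl
    intro f _
    simp only [hN3, hDD, hn, crs, det3]; ring
  let A : ℝ → ℝ := fun t => 1 / 3 * ∑ f, N3 f * La f t
  let B : ℝ → ℝ := fun t => 1 / 3 * ∑ f, N3 f * la f t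
  let g : ℝ → ℝ := fun t => 1 / 3 * ∑ f, NN f * la f t
  have lac : ∀ f, Continuous (la f) := fun f => lam_continuous _ _ _
  have Lac : ∀ f, Continuous (La f) := fun f => Lam_continuous _ _ _
  have hAd : ∀ t, HasDerivAt A (B t) t := fun t => by
    apply HasDerivAt.const_mul
    apply HasDerivAt.fun_sum
    intro f _
    exact (Lam_hasDerivAt _ _ _ t).const_mul _
  have hB : Continuous B := by simp only [B]; fun_prop
  have hg : Continuous g := by simp only [g]; fun_prop
  have hA0 : A (-K) = 0 := by simp [A, La_low]
  have hA1 : A K = 0 := by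
    simp only [A, La_high]; rw [← Finset.sum_mul, sumN3]; ring
  have main : ∀ t, 4 * π * |A t| ≤ (1 / 3 * ∑ f, la f t * NH f) ^ 2 := by
    intro t
    let σ : Equiv.Perm F := Equiv.ofBijective (sg n o z t)
      (Finite.injective_iff_bijective.1 (sg_inj n o z hn ho hz1 hz2 t))
    let X : F → ℝ := fun f => qc (x f) (x (n f)) (z f) (z (n f)) t
    let Y : F → ℝ := fun f => qc (y f) (y (n f)) (z f) (z (n f)) t
    have hXo : ∀ f, X (o f) = X f := fun f => by
      simp only [X, hx1, hx2, hz1, hz2]; exact qc_symm _ _ _ _ _ (hd f)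
    have hYo : ∀ f, Y (o f) = Y f := fun f => by
      simp only [Y, hy1, hy2, hz1, hz2]; exact qc_symm _ _ _ _ _ (hd f)
    have hXs : ∀ f, z f < t ∧ t ≤ z (n f) → X (σ f) =
        exq (x f) (x (n f)) (x (n (n f))) (z f) (z (n f)) (z (n (n f))) t := fun f hf => by
      show X (sg n o z t f) = _
      unfold sg exq
      rw [if_pos hf, hXo]
      split_ifs <;> simp only [X, hn]
    have hYs : ∀ f, z f < t ∧ t ≤ z (n f) → Y (σ f) =
        exq (y f) (y (n f)) (y (n (n f))) (z f) (z (n f)) (z (n (n f))) t := fun f hf => by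
      show Y (sg n o z t f) = _
      unfold sg exq
      rw [if_pos hf, hYo]
      split_ifs <;> simp only [Y, hn]
    have hfix : ∀ f, ¬ (z f < t ∧ t ≤ z (n f)) → σ f = f := fun f hf => by
      show sg n o z t f = f
      unfold sg; rw [if_neg hf]
    have hiso := perm_iso X Y σ
    let T : F → ℝ := fun f => tau (x f) (y f) (z f) (x (n f)) (y (n f)) (z (n f))
      (x (n (n f))) (y (n (n f))) (z (n (n f))) t
    let E : F → ℝ := fun f => ell (x f) (y f) (z f) (x (n f)) (y (n f)) (z (n f))
      (x (n (n f))) (y (n (n f))) (z (n (n f))) t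
    let Be : F → ℝ := fun f => bet (x f) (y f) (z f) (x (n f)) (y (n f)) (z (n f)) t
    have hT : ∑ f, trap (X f) (Y f) (X (σ f)) (Y (σ f)) = ∑ f, T f := by
      apply Finset.sum_congr rfl
      intro f _
      by_cases hf : z f < t ∧ t ≤ z (n f)
      · simp only [T, tau]; rw [if_pos hf, hXs f hf, hYs f hf]
      · simp only [T, tau]; rw [if_neg hf, hfix f hf]; simp [trap]
    have hE : ∑ f, √((X (σ f) - X f) ^ 2 + (Y (σ f) - Y f) ^ 2) = ∑ f, E f := by
      apply Finset.sum_congr rfl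
      intro f _
      by_cases hf : z f < t ∧ t ≤ z (n f)
      · simp only [E, ell]; rw [if_pos hf, hXs f hf, hYs f hf]
      · simp only [E, ell]; rw [if_neg hf, hfix f hf]; simp
    have hAT : A t = ∑ f, T f := by
      have h1 : ∑ f, N3 f * La f t = ∑ f, ((Be f + T f) + (Be (n f) + T (n f))
          + (Be (n (n f)) + T (n (n f)))) := by
        apply Finset.sum_congr rfl
        intro f _
        have := green (x0 := x f) (y0 := y f) (x1 := x (n f)) (y1 := y (n f))
          (x2 := x (n (n f))) (y2 := y (n (n f))) t (hd f) (hd1 f) (hd2 f)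
        simp only [N3, La, Be, T, hn]
        rw [this]; ring
      have h2 := nsum3 (fun f => Be f + T f)
      have h3 : ∑ f, Be f = 0 := osum Be fun f => by
        simp only [Be, hx1, hx2, hy1, hy2, hz1, hz2]; exact bet_symm _ _ _ _ _ _ _ (hd f)
      simp only [A]
      rw [h1, h2, Finset.sum_add_distrib, h3]; ring
    have hLE : 1 / 3 * ∑ f, la f t * NH f = ∑ f, E f := by
      have h1 : ∑ f, la f t * NH f = ∑ f, (E f + E (n f) + E (n (n f))) := by
        apply Finset.sum_congr rfl
        intro f _
        have := len_tri (x0 := x f) (y0 := y f) (x1 := x (n f)) (y1 := y (n f))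
          (x2 := x (n (n f))) (y2 := y (n (n f))) t (hd f) (hd1 f) (hd2 f)
        simp only [la, NH, E, hn]
        exact this
      rw [h1, nsum3]; ring
    rw [hAT, hLE, ← hT, ← hE]
    exact hiso
  have lan : ∀ f t, 0 ≤ la f t := fun f t => lam_nonneg t (hd f) (hd1 f) (hd2 f)
  have hineq : ∀ t, ∀ c s : ℝ, 0 ≤ c → c ^ 2 + s ^ 2 ≤ 1 →
      c * √(4 * π * |A t|) + s * B t ≤ g t := by
    intro t c s hc hcs
    have hL0 : 0 ≤ 1 / 3 * ∑ f, la f t * NH f := by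
      apply mul_nonneg (by norm_num)
      exact Finset.sum_nonneg fun f _ => mul_nonneg (lan f t) (Real.sqrt_nonneg _)
    have h1 : √(4 * π * |A t|) ≤ 1 / 3 * ∑ f, la f t * NH f :=
      Real.sqrt_le_iff.2 ⟨hL0, main t⟩
    have h2 : c * (1 / 3 * ∑ f, la f t * NH f) + s * B t ≤ g t := by
      have : c * (1 / 3 * ∑ f, la f t * NH f) + s * B t =
          1 / 3 * ∑ f, la f t * (c * NH f + s * N3 f) := by
        simp only [B, mul_add, Finset.sum_add_distrib, Finset.mul_sum]
        congr 1 <;> exact Finset.sum_congr rfl fun f _ => by ring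
      rw [this]
      apply mul_le_mul_of_nonneg_left _ (by norm_num)
      apply Finset.sum_le_sum
      intro f _
      rw [mul_comm (NN f)]
      exact mul_le_mul_of_nonneg_left (nh_nn _ _ _ _ _ _ _ _ _ c s hcs) (lan f t)
    have := mul_le_mul_of_nonneg_left h1 hc
    linarith
  have fin := oneD K hK0 A B g hAd hB hg hA0 hA1 hineq
  have iA : ∫ t in (-K)..K, A t = - (1 / 18 * ∑ f, DD f) := by
    simp only [A]
    rw [intervalIntegral.integral_const_mul, intervalIntegral.integral_finsetSum
      (fun f _ => ((Lac f).const_mul _).intervalIntegrable _ _)]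
    simp only [intervalIntegral.integral_const_mul, int_La]
    have : ∀ f, N3 f * ((3 * K - (z f + z (n f) + z (n (n f)))) / 6) =
      K / 2 * N3 f - 1 / 6 * (N3 f * (z f + z (n f) + z (n (n f)))) := fun f => by ring
    simp only [this]
    rw [Finset.sum_sub_distrib, ← Finset.mul_sum, ← Finset.mul_sum, sumN3, sumD]; ring
  have ig : ∫ t in (-K)..K, g t = 1 / 6 * ∑ f, NN f := by
    simp only [g]
    rw [intervalIntegral.integral_const_mul, intervalIntegral.integral_finsetSum
      (fun f _ => ((lac f).const_mul _).intervalIntegrable _ _)]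
    simp only [intervalIntegral.integral_const_mul, int_la]
    rw [← Finset.sum_mul]; ring
  rw [iA, ig, neg_sq] at fin
  exact fin

section grid
variable {R : Type} [CommRing R]

abbrev HE (R : Type) := (R × R) × Bool × Fin 3

def vtx : HE R → R × R
  | ((i, j), true, 0) => (i, j)
  | ((i, j), true, 1) => (i + 1, j)
  | ((i, j), true, 2) => (i, j + 1)
  | ((i, j), false, 0) => (i + 1, j + 1)
  | ((i, j), false, 1) => (i, j + 1)
  | ((i, j), false, 2) => (i + 1, j)

def nxt : HE R → HE R
  | (p, b, 0) => (p, b, 1)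
  | (p, b, 1) => (p, b, 2)
  | (p, b, 2) => (p, b, 0)

def opp : HE R → HE R
  | ((i, j), true, 0) => ((i, j - 1), false, 0)
  | ((i, j), true, 1) => ((i, j), false, 1)
  | ((i, j), true, 2) => ((i - 1, j), false, 2)
  | ((i, j), false, 0) => ((i, j + 1), true, 0)
  | ((i, j), false, 1) => ((i, j), true, 1)
  | ((i, j), false, 2) => ((i + 1, j), true, 2)

lemma nxt3 (f : HE R) : nxt (nxt (nxt f)) = f := by
  obtain ⟨p, b, k⟩ := f
  fin_cases k <;> rfl

lemma opp2 (f : HE R) : opp (opp f) = f := by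
  obtain ⟨⟨i, j⟩, b, k⟩ := f
  fin_cases k <;> cases b <;> simp [opp]

lemma vtx_opp (f : HE R) : vtx (opp f) = vtx (nxt f) := by
  obtain ⟨⟨i, j⟩, b, k⟩ := f
  fin_cases k <;> cases b <;> simp [opp, vtx, nxt]

lemma vtx_nxt_opp (f : HE R) : vtx (nxt (opp f)) = vtx f := by
  obtain ⟨⟨i, j⟩, b, k⟩ := f
  fin_cases k <;> cases b <;> simp [opp, vtx, nxt]

lemma vtx_ne [Nontrivial R] (f : HE R) : vtx f ≠ vtx (nxt f) := by
  obtain ⟨⟨i, j⟩, b, k⟩ := f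
  fin_cases k <;> cases b <;> simp [vtx, nxt]

lemma he_generic [Nontrivial R] [Fintype R] (X Y Z : R × R → ℝ)
    (hd : ∀ v w, v ≠ w → Z v ≠ Z w) :
    36 * π * (1 / 18 * ∑ f : HE R, det3 (X (vtx f)) (Y (vtx f)) (Z (vtx f))
      (X (vtx (nxt f))) (Y (vtx (nxt f))) (Z (vtx (nxt f)))
      (X (vtx (nxt (nxt f)))) (Y (vtx (nxt (nxt f)))) (Z (vtx (nxt (nxt f))))) ^ 2
    ≤ (1 / 6 * ∑ f : HE R, nn3 (X (vtx f)) (Y (vtx f)) (Z (vtx f))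
      (X (vtx (nxt f))) (Y (vtx (nxt f))) (Z (vtx (nxt f)))
      (X (vtx (nxt (nxt f)))) (Y (vtx (nxt (nxt f)))) (Z (vtx (nxt (nxt f))))) ^ 3 := by
  exact discrete_iso (nxt (R := R)) opp (fun f => X (vtx f)) (fun f => Y (vtx f))
    (fun f => Z (vtx f)) nxt3 opp2
    (fun f => by simp only [vtx_opp]) (fun f => by simp only [vtx_nxt_opp])
    (fun f => by simp only [vtx_opp]) (fun f => by simp only [vtx_nxt_opp])
    (fun f => by simp only [vtx_opp]) (fun f => by simp only [vtx_nxt_opp])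
    (fun f => hd _ _ (vtx_ne f))

lemma he_all [Nontrivial R] [Fintype R] (X Y Z : R × R → ℝ) :
    36 * π * (1 / 18 * ∑ f : HE R, det3 (X (vtx f)) (Y (vtx f)) (Z (vtx f))
      (X (vtx (nxt f))) (Y (vtx (nxt f))) (Z (vtx (nxt f)))
      (X (vtx (nxt (nxt f)))) (Y (vtx (nxt (nxt f)))) (Z (vtx (nxt (nxt f))))) ^ 2
    ≤ (1 / 6 * ∑ f : HE R, nn3 (X (vtx f)) (Y (vtx f)) (Z (vtx f))
      (X (vtx (nxt f))) (Y (vtx (nxt f))) (Z (vtx (nxt f)))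
      (X (vtx (nxt (nxt f)))) (Y (vtx (nxt (nxt f)))) (Z (vtx (nxt (nxt f))))) ^ 3 := by
  classical
  let c : R × R → ℝ := fun v => ((Fintype.equivFin (R × R) v : ℕ) : ℝ)
  have hc : Function.Injective c := by
    intro v w h
    have h' : (Fintype.equivFin (R × R) v : ℕ) = (Fintype.equivFin (R × R) w : ℕ) :=
      Nat.cast_injective (R := ℝ) h
    exact (Fintype.equivFin (R × R)).injective (Fin.ext h')
  let L : ℝ → ℝ := fun e => 36 * π * (1 / 18 * ∑ f : HE R, det3 (X (vtx f)) (Y (vtx f))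
      (Z (vtx f) + e * c (vtx f))
      (X (vtx (nxt f))) (Y (vtx (nxt f))) (Z (vtx (nxt f)) + e * c (vtx (nxt f)))
      (X (vtx (nxt (nxt f)))) (Y (vtx (nxt (nxt f))))
      (Z (vtx (nxt (nxt f))) + e * c (vtx (nxt (nxt f))))) ^ 2
  let Rr : ℝ → ℝ := fun e => (1 / 6 * ∑ f : HE R, nn3 (X (vtx f)) (Y (vtx f))
      (Z (vtx f) + e * c (vtx f))
      (X (vtx (nxt f))) (Y (vtx (nxt f))) (Z (vtx (nxt f)) + e * c (vtx (nxt f)))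
      (X (vtx (nxt (nxt f)))) (Y (vtx (nxt (nxt f))))
      (Z (vtx (nxt (nxt f))) + e * c (vtx (nxt (nxt f))))) ^ 3
  have hL : Continuous L := by
    simp only [L, det3]; fun_prop
  have hR : Continuous Rr := by
    simp only [Rr, nn3, crs]; fun_prop
  have hev : ∀ᶠ e in nhdsWithin (0 : ℝ) {0}ᶜ, L e ≤ Rr e := by
    have : ∀ᶠ e in nhdsWithin (0 : ℝ) {0}ᶜ, ∀ v w : R × R, v ≠ w →
        Z v + e * c v ≠ Z w + e * c w := by
      rw [eventually_all]; intro v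
      rw [eventually_all]; intro w
      by_cases hvw : v = w
      · simp [hvw]
      have hcn : c v - c w ≠ 0 := sub_ne_zero.2 fun h => hvw (hc h)
      by_cases hz : Z v = Z w
      · filter_upwards [self_mem_nhdsWithin] with e he _ h
        have : e * (c v - c w) = 0 := by rw [hz] at h; linarith
        rcases mul_eq_zero.1 this with h | h
        · exact he h
        · exact hcn h
      · have h1 : ∀ᶠ e in nhds (0 : ℝ), Z v + e * c v ≠ Z w + e * c w := by
          have k1 : Continuous fun e : ℝ => Z v + e * c v := by fun_prop
          have k2 : Continuous fun e : ℝ => Z w + e * c w := by fun_prop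
          exact (isOpen_ne_fun k1 k2).mem_nhds (by simpa using hz)
        exact (h1.filter_mono nhdsWithin_le_nhds).mono fun e he _ => he
    filter_upwards [this] with e he
    exact he_generic X Y (fun v => Z v + e * c v) he
  have := le_of_tendsto_of_tendsto ((hL.tendsto 0).mono_left nhdsWithin_le_nhds)
    ((hR.tendsto 0).mono_left nhdsWithin_le_nhds) hev
  simpa only [L, Rr, zero_mul, add_zero] using this

lemma det3_cyc (x0 y0 z0 x1 y1 z1 x2 y2 z2 : ℝ) :
    det3 x1 y1 z1 x2 y2 z2 x0 y0 z0 = det3 x0 y0 z0 x1 y1 z1 x2 y2 z2 := by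
  unfold det3; ring

lemma nn3_cyc (x0 y0 z0 x1 y1 z1 x2 y2 z2 : ℝ) :
    nn3 x1 y1 z1 x2 y2 z2 x0 y0 z0 = nn3 x0 y0 z0 x1 y1 z1 x2 y2 z2 := by
  unfold nn3
  rw [crs_cyc y0, crs_cyc z0, crs_cyc x0]

def qq (x0 y0 z0 x1 y1 z1 x2 y2 z2 : ℝ) : ℝ :=
  (x1 - x0) ^ 2 + (y1 - y0) ^ 2 + (z1 - z0) ^ 2
    + ((x2 - x0) ^ 2 + (y2 - y0) ^ 2 + (z2 - z0) ^ 2)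

lemma nn3_le (x0 y0 z0 x1 y1 z1 x2 y2 z2 : ℝ) :
    nn3 x0 y0 z0 x1 y1 z1 x2 y2 z2 ≤ 1 / 2 * qq x0 y0 z0 x1 y1 z1 x2 y2 z2 := by
  unfold nn3
  apply Real.sqrt_le_iff.2
  refine ⟨by unfold qq; positivity, ?_⟩
  unfold qq crs
  generalize x1 - x0 = a
  generalize x2 - x0 = a'
  generalize y1 - y0 = b
  generalize y2 - y0 = b'
  generalize z1 - z0 = d
  generalize z2 - z0 = d'
  nlinarith [sq_nonneg (a * a' + b * b' + d * d'),
    sq_nonneg (a ^ 2 + b ^ 2 + d ^ 2 - (a' ^ 2 + b' ^ 2 + d' ^ 2))]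

theorem grid_iso [Nontrivial R] [Fintype R] (X Y Z : R × R → ℝ) :
    32 * π * (1 / 2 * ∑ i : R, ∑ j : R,
      (det3 (X (i, j)) (Y (i, j)) (Z (i, j)) (X (i + 1, j)) (Y (i + 1, j)) (Z (i + 1, j))
          (X (i, j + 1)) (Y (i, j + 1)) (Z (i, j + 1))
        + det3 (X (i + 1, j + 1)) (Y (i + 1, j + 1)) (Z (i + 1, j + 1))
          (X (i, j + 1)) (Y (i, j + 1)) (Z (i, j + 1))
          (X (i + 1, j)) (Y (i + 1, j)) (Z (i + 1, j)))) ^ 2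
    ≤ (1 / 2 * ∑ i : R, ∑ j : R,
      (qq (X (i, j)) (Y (i, j)) (Z (i, j)) (X (i + 1, j)) (Y (i + 1, j)) (Z (i + 1, j))
          (X (i, j + 1)) (Y (i, j + 1)) (Z (i, j + 1))
        + qq (X (i + 1, j + 1)) (Y (i + 1, j + 1)) (Z (i + 1, j + 1))
          (X (i, j + 1)) (Y (i, j + 1)) (Z (i, j + 1))
          (X (i + 1, j)) (Y (i + 1, j)) (Z (i + 1, j)))) ^ 3 := by
  have h := he_all X Y Z
  simp only [Fintype.sum_prod_type, Fin.sum_univ_three, Fintype.sum_bool, vtx, nxt] at h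
  set S := ∑ i : R, ∑ j : R,
      (det3 (X (i, j)) (Y (i, j)) (Z (i, j)) (X (i + 1, j)) (Y (i + 1, j)) (Z (i + 1, j))
          (X (i, j + 1)) (Y (i, j + 1)) (Z (i, j + 1))
        + det3 (X (i + 1, j + 1)) (Y (i + 1, j + 1)) (Z (i + 1, j + 1))
          (X (i, j + 1)) (Y (i, j + 1)) (Z (i, j + 1))
          (X (i + 1, j)) (Y (i + 1, j)) (Z (i + 1, j))) with hS
  set Q := ∑ i : R, ∑ j : R,
      (qq (X (i, j)) (Y (i, j)) (Z (i, j)) (X (i + 1, j)) (Y (i + 1, j)) (Z (i + 1, j))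
          (X (i, j + 1)) (Y (i, j + 1)) (Z (i, j + 1))
        + qq (X (i + 1, j + 1)) (Y (i + 1, j + 1)) (Z (i + 1, j + 1))
          (X (i, j + 1)) (Y (i, j + 1)) (Z (i, j + 1))
          (X (i + 1, j)) (Y (i + 1, j)) (Z (i + 1, j))) with hQ
  have key : ∀ (A B C D : ℝ), 36 * π * (1 / 18 * A) ^ 2 ≤ (1 / 6 * B) ^ 3 → A = 3 * S →
      0 ≤ B → B ≤ 3 / 2 * Q → 32 * π * (1 / 2 * S) ^ 2 ≤ (1 / 2 * Q) ^ 3 := by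
    intro A B _ _ h1 h2 h3 h4
    have : (1 / 6 * B) ^ 3 ≤ (1 / 6 * (3 / 2 * Q)) ^ 3 := by gcongr
    subst h2
    nlinarith
  refine key _ _ 0 0 h ?_ ?_ ?_
  · rw [hS, Finset.mul_sum]
    refine Finset.sum_congr rfl fun i _ => ?_
    rw [Finset.mul_sum]
    refine Finset.sum_congr rfl fun j _ => ?_
    unfold det3; ring
  · refine Finset.sum_nonneg fun i _ => Finset.sum_nonneg fun j _ => ?_
    unfold nn3; positivity
  · rw [hQ, Finset.mul_sum]
    refine Finset.sum_le_sum fun i _ => ?_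
    rw [Finset.mul_sum]
    refine Finset.sum_le_sum fun j _ => ?_
    have e1 := nn3_le (X (i, j)) (Y (i, j)) (Z (i, j)) (X (i + 1, j)) (Y (i + 1, j))
      (Z (i + 1, j)) (X (i, j + 1)) (Y (i, j + 1)) (Z (i, j + 1))
    have e2 := nn3_le (X (i + 1, j + 1)) (Y (i + 1, j + 1)) (Z (i + 1, j + 1))
          (X (i, j + 1)) (Y (i, j + 1)) (Z (i, j + 1))
          (X (i + 1, j)) (Y (i + 1, j)) (Z (i + 1, j))
    have c1 := nn3_cyc (X (i, j)) (Y (i, j)) (Z (i, j)) (X (i + 1, j)) (Y (i + 1, j))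
      (Z (i + 1, j)) (X (i, j + 1)) (Y (i, j + 1)) (Z (i, j + 1))
    have c2 := nn3_cyc (X (i + 1, j)) (Y (i + 1, j))
      (Z (i + 1, j)) (X (i, j + 1)) (Y (i, j + 1)) (Z (i, j + 1)) (X (i, j)) (Y (i, j)) (Z (i, j))
    have c3 := nn3_cyc (X (i + 1, j + 1)) (Y (i + 1, j + 1)) (Z (i + 1, j + 1))
          (X (i, j + 1)) (Y (i, j + 1)) (Z (i, j + 1))
          (X (i + 1, j)) (Y (i + 1, j)) (Z (i + 1, j))
    have c4 := nn3_cyc (X (i, j + 1)) (Y (i, j + 1)) (Z (i, j + 1))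
          (X (i + 1, j)) (Y (i + 1, j)) (Z (i + 1, j))
          (X (i + 1, j + 1)) (Y (i + 1, j + 1)) (Z (i + 1, j + 1))
    linarith
end grid

def d3 (p q r : Fin 3 → ℝ) : ℝ := det3 (p 0) (p 1) (p 2) (q 0) (q 1) (q 2) (r 0) (r 1) (r 2)
def q3 (p q r : Fin 3 → ℝ) : ℝ := qq (p 0) (p 1) (p 2) (q 0) (q 1) (q 2) (r 0) (r 1) (r 2)

lemma zmod_sum (N : ℕ) [NeZero N] (f : ℕ → ℝ) :
    ∑ i : ZMod N, f i.val = ∑ i ∈ Finset.range N, f i := by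
  obtain ⟨n, rfl⟩ := Nat.exists_eq_succ_of_ne_zero (NeZero.ne N)
  exact Fin.sum_univ_eq_sum_range f (n + 1)

lemma zmod_val (N : ℕ) (hN : 2 ≤ N) {β : Type} (f : ℕ → β) (hf : f N = f 0) (i : ZMod N) :
    f (i + 1).val = f (i.val + 1) := by
  have : NeZero N := ⟨by omega⟩
  have : Fact (1 < N) := ⟨by omega⟩
  have h := ZMod.val_lt i
  rw [ZMod.val_add, ZMod.val_one]
  rcases Nat.lt_or_ge (i.val + 1) N with h1 | h1
  · rw [Nat.mod_eq_of_lt h1]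
  · have : i.val + 1 = N := by omega
    rw [this, Nat.mod_self, hf]

theorem range_iso (N : ℕ) (hN : 2 ≤ N) (w : ℕ → ℕ → Fin 3 → ℝ)
    (h1 : ∀ j, w N j = w 0 j) (h2 : ∀ i, w i N = w i 0) :
    32 * π * (1 / 2 * ∑ i ∈ Finset.range N, ∑ j ∈ Finset.range N,
      (d3 (w i j) (w (i + 1) j) (w i (j + 1))
        + d3 (w (i + 1) (j + 1)) (w i (j + 1)) (w (i + 1) j))) ^ 2
    ≤ (1 / 2 * ∑ i ∈ Finset.range N, ∑ j ∈ Finset.range N,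
      (q3 (w i j) (w (i + 1) j) (w i (j + 1))
        + q3 (w (i + 1) (j + 1)) (w i (j + 1)) (w (i + 1) j))) ^ 3 := by
  have : NeZero N := ⟨by omega⟩
  have : Fact (1 < N) := ⟨by omega⟩
  have h := grid_iso (R := ZMod N) (fun v => w v.1.val v.2.val 0) (fun v => w v.1.val v.2.val 1)
    (fun v => w v.1.val v.2.val 2)
  have e1 : ∀ i j : ZMod N, w (i + 1).val j.val = w (i.val + 1) j.val := fun i j =>
    zmod_val N hN (fun a => w a j.val) (h1 _) i
  have e2 : ∀ i j : ZMod N, w i.val (j + 1).val = w i.val (j.val + 1) := fun i j =>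
    zmod_val N hN (fun a => w i.val a) (h2 _) j
  have e3 : ∀ i j : ZMod N, w (i.val + 1) (j + 1).val = w (i.val + 1) (j.val + 1) := fun i j =>
    zmod_val N hN (fun a => w (i.val + 1) a) (h2 _) j
  simp only [e1, e2, e3] at h
  have z2 : ∀ f : ℕ → ℕ → ℝ, ∑ i : ZMod N, ∑ j : ZMod N, f i.val j.val
      = ∑ i ∈ Finset.range N, ∑ j ∈ Finset.range N, f i j := by
    intro f
    rw [← zmod_sum N]
    exact Finset.sum_congr rfl fun i _ => zmod_sum N _
  rw [← z2 (fun i j => d3 (w i j) (w (i + 1) j) (w i (j + 1))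
        + d3 (w (i + 1) (j + 1)) (w i (j + 1)) (w (i + 1) j)),
    ← z2 (fun i j => q3 (w i j) (w (i + 1) j) (w i (j + 1))
        + q3 (w (i + 1) (j + 1)) (w i (j + 1)) (w (i + 1) j))]
  exact h

lemma quot_close (u : ℝ × ℝ → Fin 3 → ℝ) (hu : Differentiable ℝ u) (p x e : ℝ × ℝ) (r c η : ℝ)
    (hη : ∀ q ∈ Metric.closedBall p r, ‖fderiv ℝ u q - fderiv ℝ u p‖ ≤ η)
    (hx : x ∈ Metric.closedBall p r) (hy : x + c • e ∈ Metric.closedBall p r) (hc : c ≠ 0)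
    (he : ‖e‖ ≤ 1) :
    ‖c⁻¹ • (u (x + c • e) - u x) - fderiv ℝ u p e‖ ≤ η := by
  have h := (convex_closedBall p r).norm_image_sub_le_of_norm_fderiv_le'
    (𝕜 := ℝ) (fun q _ => hu q) hη hx hy
  have hη0 : 0 ≤ η := (norm_nonneg _).trans (hη x hx)
  rw [add_sub_cancel_left, map_smul] at h
  have e1 : c⁻¹ • (u (x + c • e) - u x) - fderiv ℝ u p e
      = c⁻¹ • (u (x + c • e) - u x - c • fderiv ℝ u p e) := by
    rw [smul_sub _ _ (c • _), smul_smul, inv_mul_cancel₀ hc, one_smul]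
  rw [e1, norm_smul, norm_inv]
  rw [norm_smul] at h
  have hc' : 0 < ‖c‖ := norm_pos_iff.2 hc
  rw [inv_mul_le_iff₀ hc']
  calc _ ≤ _ := h
    _ ≤ η * (‖c‖ * 1) := by gcongr
    _ = _ := by ring

lemma tuple_close (u : ℝ × ℝ → Fin 3 → ℝ) (hu : ContDiff ℝ (⊤ : ℕ∞) u) (hs : HasCompactSupport u)
    (η : ℝ) (hη : 0 < η) : ∃ δ > 0, ∀ (p x : ℝ × ℝ) (c : ℝ), c ≠ 0 → |c| < δ →
      dist x p ≤ |c| → dist (x + c • ((1, 0) : ℝ × ℝ)) p ≤ |c| →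
      dist (x + c • ((0, 1) : ℝ × ℝ)) p ≤ |c| →
      dist (u x, c⁻¹ • (u (x + c • ((1, 0) : ℝ × ℝ)) - u x),
        c⁻¹ • (u (x + c • ((0, 1) : ℝ × ℝ)) - u x)) (u p, pderivX u p, pderivY u p) < η := by
  have hd : Differentiable ℝ u := hu.differentiable (by simp)
  have hc1 : Continuous u := hu.continuous
  have hc2 : Continuous (fderiv ℝ u) := hu.continuous_fderiv (by simp)
  have k1 : UniformContinuous u := hs.uniformContinuous_of_continuous hc1
  have k2 : UniformContinuous (fderiv ℝ u) := (hs.fderiv ℝ).uniformContinuous_of_continuous hc2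
  obtain ⟨δ1, hδ1, H1⟩ := Metric.uniformContinuous_iff.1 k1 η hη
  obtain ⟨δ2, hδ2, H2⟩ := Metric.uniformContinuous_iff.1 k2 (η / 2) (by positivity)
  refine ⟨min δ1 δ2, by positivity, ?_⟩
  intro p x c hc hcd h0 h1 h2
  have a1 := hcd.trans_le (min_le_left _ _)
  have a2 := hcd.trans_le (min_le_right _ _)
  have hb : ∀ q ∈ Metric.closedBall p |c|, ‖fderiv ℝ u q - fderiv ℝ u p‖ ≤ η / 2 := by
    intro q hq
    rw [← dist_eq_norm]
    exact (H2 ((Metric.mem_closedBall.1 hq).trans_lt a2)).le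
  rw [Prod.dist_eq, Prod.dist_eq]
  refine max_lt (H1 (h0.trans_lt a1)) (max_lt ?_ ?_)
  · rw [dist_eq_norm]
    have := quot_close u hd p x (1, 0) |c| c (η / 2) hb h0 h1 hc (by simp [Prod.norm_def])
    exact this.trans_lt (by linarith)
  · rw [dist_eq_norm]
    have := quot_close u hd p x (0, 1) |c| c (η / 2) hb h0 h2 hc (by simp [Prod.norm_def])
    exact this.trans_lt (by linarith)

lemma phi_close (u : ℝ × ℝ → Fin 3 → ℝ) (hu : ContDiff ℝ (⊤ : ℕ∞) u) (hs : HasCompactSupport u)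
    (C : Set (ℝ × ℝ)) (hC : IsCompact C)
    (Φ : (Fin 3 → ℝ) × (Fin 3 → ℝ) × (Fin 3 → ℝ) → ℝ) (hΦ : Continuous Φ)
    (ε : ℝ) (hε : 0 < ε) : ∃ δ > 0, ∀ p ∈ C, ∀ (x : ℝ × ℝ) (c : ℝ), c ≠ 0 → |c| < δ →
      dist x p ≤ |c| → dist (x + c • ((1, 0) : ℝ × ℝ)) p ≤ |c| →
      dist (x + c • ((0, 1) : ℝ × ℝ)) p ≤ |c| →
      |Φ (u x, c⁻¹ • (u (x + c • ((1, 0) : ℝ × ℝ)) - u x),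
        c⁻¹ • (u (x + c • ((0, 1) : ℝ × ℝ)) - u x)) - Φ (u p, pderivX u p, pderivY u p)| < ε := by
  have hX : Continuous fun p => (u p, pderivX u p, pderivY u p) := by
    have hc1 : Continuous u := hu.continuous
    have hc2 : Continuous (fderiv ℝ u) := hu.continuous_fderiv (by simp)
    unfold pderivX pderivY
    fun_prop
  have hco := hC.image hX
  have := hco.uniformContinuousAt_of_continuousAt Φ (fun a _ => hΦ.continuousAt)
    (Metric.dist_mem_uniformity hε)
  obtain ⟨η, hη, H⟩ := Metric.mem_uniformity_dist.1 this
  obtain ⟨δ, hδ, HD⟩ := tuple_close u hu hs η hη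
  refine ⟨δ, hδ, fun p hp x c hc hcd h0 h1 h2 => ?_⟩
  have h3 := HD p x c hc hcd h0 h1 h2
  rw [dist_comm] at h3
  have h4 := H h3 (Set.mem_image_of_mem _ hp)
  simp only [Set.mem_ofPred_eq] at h4
  rwa [dist_comm, Real.dist_eq] at h4

lemma cell_est (f : ℝ × ℝ → ℝ) (hf : Continuous f) (a b h ε S : ℝ) (hh : 0 < h)
    (hS : ∀ x ∈ Set.Icc a (a + h), ∀ y ∈ Set.Icc b (b + h), |S - h ^ 2 * f (x, y)| ≤ ε * h ^ 2) :
    |S - ∫ x in a..(a + h), ∫ y in b..(b + h), f (x, y)| ≤ ε * h ^ 2 := by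
  have hfint : ∀ x, IntervalIntegrable (fun y => f (x, y)) volume b (b + h) := fun x =>
    Continuous.intervalIntegrable (by fun_prop) _ _
  have hc2 : Continuous fun x => ∫ y in b..(b + h), f (x, y) :=
    intervalIntegral.continuous_parametric_intervalIntegral_of_continuous' (by exact hf) _ _
  have e1 : S - ∫ x in a..(a + h), ∫ y in b..(b + h), f (x, y)
      = ∫ x in a..(a + h), (∫ y in b..(b + h), (S / h ^ 2 - f (x, y))) := by
    have : ∀ x, (∫ y in b..(b + h), (S / h ^ 2 - f (x, y)))
        = S / h - ∫ y in b..(b + h), f (x, y) := by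
      intro x
      rw [intervalIntegral.integral_sub (by simp) (hfint x), intervalIntegral.integral_const]
      congr 1
      simp only [add_sub_cancel_left, smul_eq_mul]
      field_simp
    simp only [this]
    rw [intervalIntegral.integral_sub (by simp) (hc2.intervalIntegrable _ _),
      intervalIntegral.integral_const]
    congr 1
    simp only [add_sub_cancel_left, smul_eq_mul]
    field_simp
  rw [e1]
  have hab : a ≤ a + h := by linarith
  have hbb : b ≤ b + h := by linarith
  have := intervalIntegral.norm_integral_le_of_norm_le_const (a := a) (b := a + h) (C := ε * h)
    (f := fun x => ∫ y in b..(b + h), (S / h ^ 2 - f (x, y))) (by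
      intro x hx
      rw [Set.uIoc_of_le hab] at hx
      have := intervalIntegral.norm_integral_le_of_norm_le_const (a := b) (b := b + h) (C := ε)
        (f := fun y => S / h ^ 2 - f (x, y)) (by
          intro y hy
          rw [Set.uIoc_of_le hbb] at hy
          have h3 := hS x (Set.Ioc_subset_Icc_self hx) y (Set.Ioc_subset_Icc_self hy)
          have h4 : S / h ^ 2 - f (x, y) = (S - h ^ 2 * f (x, y)) / h ^ 2 := by field_simp
          rw [h4, Real.norm_eq_abs, abs_div, abs_of_pos (by positivity : 0 < h ^ 2),
            div_le_iff₀ (by positivity)]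
          exact h3)
      rwa [add_sub_cancel_left, abs_of_pos hh] at this)
  rw [add_sub_cancel_left, abs_of_pos hh, Real.norm_eq_abs] at this
  calc _ ≤ _ := this
    _ = _ := by ring

lemma grid_sum (f : ℝ × ℝ → ℝ) (hf : Continuous f) (K h : ℝ) (N : ℕ) (hN : N * h = 2 * K) :
    ∑ i ∈ Finset.range N, ∑ j ∈ Finset.range N,
      ∫ x in (-K + i * h)..((-K + i * h) + h), ∫ y in (-K + j * h)..((-K + j * h) + h), f (x, y)
    = ∫ x in (-K)..K, ∫ y in (-K)..K, f (x, y) := by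
  have hs : ∀ i : ℕ, (-K + (i : ℝ) * h) + h = -K + ((i + 1 : ℕ) : ℝ) * h := by
    intro i; push_cast; ring
  have hend : -K + (N : ℝ) * h = K := by rw [hN]; ring
  have hst : -K + ((0 : ℕ) : ℝ) * h = -K := by simp
  have one : ∀ g : ℝ → ℝ, Continuous g → ∑ i ∈ Finset.range N,
      ∫ x in (-K + i * h)..((-K + i * h) + h), g x = ∫ x in (-K)..K, g x := by
    intro g hg
    simp only [hs]
    rw [intervalIntegral.sum_integral_adjacent_intervals (a := fun i : ℕ => -K + (i : ℝ) * h)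
      (fun k _ => hg.intervalIntegrable _ _)]
    simp only [hend, hst]
  have hc2 : ∀ b c, Continuous fun x => ∫ y in b..c, f (x, y) := fun b c =>
    intervalIntegral.continuous_parametric_intervalIntegral_of_continuous' (by exact hf) _ _
  rw [← one _ (hc2 _ _)]
  refine Finset.sum_congr rfl fun i _ => ?_
  rw [← intervalIntegral.integral_finsetSum (fun j _ => (hc2 _ _).intervalIntegrable _ _)]
  refine intervalIntegral.integral_congr fun x _ => ?_
  exact one (fun y => f (x, y)) (by fun_prop)

lemma riemann_est (f : ℝ × ℝ → ℝ) (hf : Continuous f) (K h ε : ℝ) (N : ℕ) (hN : N * h = 2 * K)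
    (hh : 0 < h) (S : ℕ → ℕ → ℝ)
    (hS : ∀ i < N, ∀ j < N, ∀ x ∈ Set.Icc (-K + i * h) ((-K + i * h) + h),
      ∀ y ∈ Set.Icc (-K + j * h) ((-K + j * h) + h), |S i j - h ^ 2 * f (x, y)| ≤ ε * h ^ 2) :
    |∑ i ∈ Finset.range N, ∑ j ∈ Finset.range N, S i j
      - ∫ x in (-K)..K, ∫ y in (-K)..K, f (x, y)| ≤ ε * (2 * K) ^ 2 := by
  rw [← grid_sum f hf K h N hN, ← Finset.sum_sub_distrib]
  simp only [← Finset.sum_sub_distrib]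
  calc _ ≤ ∑ i ∈ Finset.range N, ∑ j ∈ Finset.range N, ε * h ^ 2 := by
        refine (Finset.abs_sum_le_sum_abs _ _).trans (Finset.sum_le_sum fun i hi => ?_)
        refine (Finset.abs_sum_le_sum_abs _ _).trans (Finset.sum_le_sum fun j hj => ?_)
        exact cell_est f hf _ _ h ε _ hh (hS i (Finset.mem_range.1 hi) j (Finset.mem_range.1 hj))
    _ = ε * (N * h) ^ 2 := by simp; ring
    _ = _ := by rw [hN]

lemma grid_limit (u : ℝ × ℝ → Fin 3 → ℝ) (hu : ContDiff ℝ (⊤ : ℕ∞) u) (hs : HasCompactSupport u)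
    (K : ℝ) (hK : 0 < K)
    (Φ : (Fin 3 → ℝ) × (Fin 3 → ℝ) × (Fin 3 → ℝ) → ℝ) (hΦ : Continuous Φ)
    (G : (Fin 3 → ℝ) → (Fin 3 → ℝ) → (Fin 3 → ℝ) → ℝ)
    (hG : ∀ (c : ℝ) P Q R, c ≠ 0 → G P Q R = c ^ 2 * Φ (P, c⁻¹ • (Q - P), c⁻¹ • (R - P))) :
    Tendsto (fun N : ℕ => 1 / 2 * ∑ i ∈ Finset.range N, ∑ j ∈ Finset.range N,
      (G (u (-K + i * (2 * K / N), -K + j * (2 * K / N)))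
          (u (-K + (i + 1 : ℕ) * (2 * K / N), -K + j * (2 * K / N)))
          (u (-K + i * (2 * K / N), -K + (j + 1 : ℕ) * (2 * K / N)))
        + G (u (-K + (i + 1 : ℕ) * (2 * K / N), -K + (j + 1 : ℕ) * (2 * K / N)))
          (u (-K + i * (2 * K / N), -K + (j + 1 : ℕ) * (2 * K / N)))
          (u (-K + (i + 1 : ℕ) * (2 * K / N), -K + j * (2 * K / N))))) atTop
      (nhds (∫ x in (-K)..K, ∫ y in (-K)..K,
        Φ (u (x, y), pderivX u (x, y), pderivY u (x, y)))) := by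
  have hX : Continuous fun p => (u p, pderivX u p, pderivY u p) := by
    have hc1 : Continuous u := hu.continuous
    have hc2 : Continuous (fderiv ℝ u) := hu.continuous_fderiv (by simp)
    unfold pderivX pderivY
    fun_prop
  rw [Metric.tendsto_atTop]
  intro ε0 hε0
  obtain ⟨ε, hε, hεε⟩ : ∃ ε > 0, ε * (2 * K) ^ 2 < ε0 := by
    refine ⟨ε0 / (2 * K) ^ 2 / 2, by positivity, ?_⟩
    have : ε0 / (2 * K) ^ 2 / 2 * (2 * K) ^ 2 = ε0 / 2 := by field_simp
    rw [this]; linarith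
  obtain ⟨δ, hδ, H⟩ := phi_close u hu hs (Set.Icc (-K) K ×ˢ Set.Icc (-K) K)
    (isCompact_Icc.prod isCompact_Icc) Φ hΦ ε hε
  obtain ⟨N0, hN0⟩ := exists_nat_gt (2 * K / δ)
  refine ⟨N0 + 1, fun N hN => ?_⟩
  have hNpos : (0 : ℝ) < N := by
    have : 0 < N := by omega
    exact_mod_cast this
  have hNδ : 2 * K / N < δ := by
    rw [div_lt_iff₀ hNpos, mul_comm]
    rw [div_lt_iff₀ hδ] at hN0
    have : (N0 : ℝ) ≤ N := by exact_mod_cast (by omega : N0 ≤ N)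
    nlinarith
  set h := 2 * K / N with hh
  have hpos : 0 < h := by positivity
  have hNh : N * h = 2 * K := by rw [hh]; field_simp
  rw [Real.dist_eq, Finset.mul_sum]
  simp only [Finset.mul_sum]
  refine lt_of_le_of_lt (riemann_est (fun p => Φ (u p, pderivX u p, pderivY u p)) (hΦ.comp hX) K h ε
    N hNh hpos _ ?_) hεε
  intro i hi j hj x hx y hy
  have bnd : ∀ i < N, ∀ x ∈ Set.Icc (-K + i * h) ((-K + i * h) + h), x ∈ Set.Icc (-K) K := by
    intro i hi x hx
    have h1 : (i : ℝ) + 1 ≤ N := by exact_mod_cast hi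
    have h2 : ((i : ℝ) + 1) * h ≤ N * h := by gcongr
    have h3 : (0 : ℝ) ≤ i * h := by positivity
    exact ⟨by linarith [hx.1], by linarith [hx.2]⟩
  have hpC : (x, y) ∈ Set.Icc (-K) K ×ˢ Set.Icc (-K) K := ⟨bnd i hi x hx, bnd j hj y hy⟩
  have hs' : ∀ i : ℕ, -K + ((i + 1 : ℕ) : ℝ) * h = (-K + (i : ℝ) * h) + h := by
    intro i; push_cast; ring
  rw [hs', hs']
  set a := -K + (i : ℝ) * h
  set b := -K + (j : ℝ) * h
  have dd : ∀ s t, |s - x| ≤ h → |t - y| ≤ h → dist ((s, t) : ℝ × ℝ) (x, y) ≤ h := by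
    intro s t h1 h2
    rw [Prod.dist_eq]
    exact max_le h1 h2
  have ax : |a - x| ≤ h := by rw [abs_le]; constructor <;> linarith [hx.1, hx.2]
  have ax' : |a + h - x| ≤ h := by rw [abs_le]; constructor <;> linarith [hx.1, hx.2]
  have bx : |b - y| ≤ h := by rw [abs_le]; constructor <;> linarith [hy.1, hy.2]
  have bx' : |b + h - y| ≤ h := by rw [abs_le]; constructor <;> linarith [hy.1, hy.2]
  have v1 : ((a, b) : ℝ × ℝ) + h • ((1, 0) : ℝ × ℝ) = (a + h, b) := by simp
  have v2 : ((a, b) : ℝ × ℝ) + h • ((0, 1) : ℝ × ℝ) = (a, b + h) := by simp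
  have v3 : ((a + h, b + h) : ℝ × ℝ) + (-h) • ((1, 0) : ℝ × ℝ) = (a, b + h) := by simp
  have v4 : ((a + h, b + h) : ℝ × ℝ) + (-h) • ((0, 1) : ℝ × ℝ) = (a + h, b) := by simp
  have l1 := H (x, y) hpC (a, b) h hpos.ne' (by rwa [abs_of_pos hpos])
    (by rw [abs_of_pos hpos]; exact dd _ _ ax bx)
    (by rw [abs_of_pos hpos, v1]; exact dd _ _ ax' bx)
    (by rw [abs_of_pos hpos, v2]; exact dd _ _ ax bx')
  have l2 := H (x, y) hpC (a + h, b + h) (-h) (by simpa using hpos.ne')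
    (by rwa [abs_neg, abs_of_pos hpos])
    (by rw [abs_neg, abs_of_pos hpos]; exact dd _ _ ax' bx')
    (by rw [abs_neg, abs_of_pos hpos, v3]; exact dd _ _ ax bx')
    (by rw [abs_neg, abs_of_pos hpos, v4]; exact dd _ _ ax' bx)
  rw [v1, v2] at l1
  rw [v3, v4] at l2
  rw [hG h _ _ _ hpos.ne', hG (-h) (u (a + h, b + h)) _ _ (by simpa using hpos.ne')]
  rw [abs_lt] at l1 l2
  have hsq : 0 < h ^ 2 := by positivity
  have hneg : (-h) ^ 2 = h ^ 2 := by ring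
  rw [hneg, abs_le]
  constructor <;> nlinarith [l1.1, l1.2, l2.1, l2.2]

lemma d3_hom (c : ℝ) (P Q R : Fin 3 → ℝ) (hc : c ≠ 0) :
    d3 P Q R = c ^ 2 * dot3 P (crossProduct (c⁻¹ • (Q - P)) (c⁻¹ • (R - P))) := by
  simp only [d3, det3, dot3, cross_apply, Fin.sum_univ_three, Pi.smul_apply, Pi.sub_apply,
    smul_eq_mul, Matrix.cons_val]
  field_simp
  ring

lemma q3_hom (c : ℝ) (P Q R : Fin 3 → ℝ) (hc : c ≠ 0) :
    q3 P Q R = c ^ 2 * (dot3 (c⁻¹ • (Q - P)) (c⁻¹ • (Q - P))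
      + dot3 (c⁻¹ • (R - P)) (c⁻¹ • (R - P))) := by
  simp only [q3, qq, dot3, Fin.sum_univ_three, Pi.smul_apply, Pi.sub_apply, smul_eq_mul]
  field_simp

theorem square_iso (u : ℝ × ℝ → Fin 3 → ℝ) (hu : ContDiff ℝ (⊤ : ℕ∞) u) (hs : HasCompactSupport u)
    (K : ℝ) (hK : 0 < K) (hz : ∀ x y, K ≤ |x| ∨ K ≤ |y| → u (x, y) = 0) :
    32 * π * (∫ x in (-K)..K, ∫ y in (-K)..K,
      dot3 (u (x, y)) (crossProduct (pderivX u (x, y)) (pderivY u (x, y)))) ^ 2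
    ≤ (∫ x in (-K)..K, ∫ y in (-K)..K,
      (dot3 (pderivX u (x, y)) (pderivX u (x, y))
        + dot3 (pderivY u (x, y)) (pderivY u (x, y)))) ^ 3 := by
  have t1 := grid_limit u hu hs K hK (fun t => dot3 t.1 (crossProduct t.2.1 t.2.2))
    (by simp only [dot3, cross_apply, Fin.sum_univ_three, Matrix.cons_val]; fun_prop)
    d3 (fun c P Q R hc => d3_hom c P Q R hc)
  have t2 := grid_limit u hu hs K hK (fun t => dot3 t.2.1 t.2.1 + dot3 t.2.2 t.2.2)
    (by simp only [dot3, Fin.sum_univ_three]; fun_prop)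
    q3 (fun c P Q R hc => q3_hom c P Q R hc)
  refine le_of_tendsto_of_tendsto ((t1.pow 2).const_mul (32 * π)) (t2.pow 3) ?_
  filter_upwards [eventually_ge_atTop 2] with N hN
  have hN0 : (N : ℝ) ≠ 0 := by
    have : N ≠ 0 := by omega
    exact_mod_cast this
  have e1 : -K + (N : ℝ) * (2 * K / N) = K := by field_simp; ring
  have e0 : -K + ((0 : ℕ) : ℝ) * (2 * K / N) = -K := by simp
  refine range_iso N hN (fun i j => u (-K + i * (2 * K / N), -K + j * (2 * K / N))) ?_ ?_
  · intro j
    simp only [e1, e0]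
    rw [hz _ _ (Or.inl (le_abs_self K)), hz _ _ (Or.inl (by rw [abs_neg]; exact le_abs_self K))]
  · intro j
    simp only [e1, e0]
    rw [hz _ _ (Or.inr (le_abs_self K)), hz _ _ (Or.inr (by rw [abs_neg]; exact le_abs_self K))]

lemma int_conv (Ω : Set (ℝ × ℝ)) (f : ℝ × ℝ → ℝ) (hf : Continuous f) (K : ℝ) (hK : 0 < K)
    (h1 : ∀ p, p ∉ Ω → f p = 0) (h2 : ∀ x y, K ≤ |x| ∨ K ≤ |y| → f (x, y) = 0) :
    ∫ p in Ω, f p = ∫ x in (-K)..K, ∫ y in (-K)..K, f (x, y) := by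
  rw [setIntegral_eq_integral_of_forall_compl_eq_zero h1]
  have hsub : ∀ p, p ∉ Set.Ioc (-K) K ×ˢ Set.Ioc (-K) K → f p = 0 := by
    rintro ⟨x, y⟩ hp
    apply h2
    by_contra hcon
    push Not at hcon
    rw [abs_lt, abs_lt] at hcon
    exact hp ⟨⟨hcon.1.1, hcon.1.2.le⟩, ⟨hcon.2.1, hcon.2.2.le⟩⟩
  rw [← setIntegral_eq_integral_of_forall_compl_eq_zero hsub, Measure.volume_eq_prod,
    setIntegral_prod]
  · have hle : -K ≤ K := by linarith
    rw [intervalIntegral.integral_of_le hle]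
    simp only [intervalIntegral.integral_of_le hle]
  · refine IntegrableOn.mono_set (t := Set.Icc (-K) K ×ˢ Set.Icc (-K) K) ?_
      (Set.prod_mono Set.Ioc_subset_Icc_self Set.Ioc_subset_Icc_self)
    exact hf.continuousOn.integrableOn_compact (isCompact_Icc.prod isCompact_Icc)

theorem iso_main (Ω : Set (ℝ × ℝ)) (u : ℝ × ℝ → Fin 3 → ℝ) (hu : IsAdmissible Ω u) :
    32 * π * vol Ω u ^ 2 ≤ dirEnergy Ω u ^ 3 := by
  obtain ⟨hsm, hcs, hsub⟩ := hu
  obtain ⟨r, hr⟩ := hcs.isCompact.isBounded.subset_closedBall (0 : ℝ × ℝ)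
  set K := |r| + 1 with hKdef
  have hK : 0 < K := by positivity
  have hout : ∀ x y : ℝ, K ≤ |x| ∨ K ≤ |y| → (x, y) ∉ tsupport u := by
    intro x y h hm
    have h1 := hr hm
    rw [mem_closedBall_zero_iff, Prod.norm_def] at h1
    have h2 := (le_max_left _ _).trans h1
    have h3 := (le_max_right _ _).trans h1
    simp only [Real.norm_eq_abs] at h2 h3
    have := le_abs_self r
    rcases h with h | h <;> linarith
  have hu0 : ∀ p, p ∉ tsupport u → u p = 0 := fun p hp => image_eq_zero_of_notMem_tsupport hp
  have hd0 : ∀ p, p ∉ tsupport u → fderiv ℝ u p = 0 := fun p hp => by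
    by_contra h
    exact hp (support_fderiv_subset ℝ h)
  have hc1 : Continuous u := hsm.continuous
  have hc2 : Continuous (fderiv ℝ u) := hsm.continuous_fderiv (by simp)
  have cX : Continuous (pderivX u) := by unfold pderivX; fun_prop
  have cY : Continuous (pderivY u) := by unfold pderivY; fun_prop
  have zX : ∀ p, p ∉ tsupport u → pderivX u p = 0 := fun p hp => by simp [pderivX, hd0 p hp]
  have zY : ∀ p, p ∉ tsupport u → pderivY u p = 0 := fun p hp => by simp [pderivY, hd0 p hp]
  have h := square_iso u hsm hcs K hK (fun x y hxy => hu0 _ (hout x y hxy))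
  have z1 : ∀ p, p ∉ tsupport u → dot3 (u p) (crossProduct (pderivX u p) (pderivY u p)) = 0 :=
    fun p hp => by simp [dot3, hu0 p hp]
  have z2 : ∀ p, p ∉ tsupport u →
      dot3 (pderivX u p) (pderivX u p) + dot3 (pderivY u p) (pderivY u p) = 0 :=
    fun p hp => by simp [dot3, zX p hp, zY p hp]
  unfold vol dirEnergy
  rw [int_conv Ω (fun p => dot3 (u p) (crossProduct (pderivX u p) (pderivY u p))) (by
      simp only [dot3, cross_apply, Fin.sum_univ_three, Matrix.cons_val]; fun_prop) K hK
      (fun p hp => z1 p fun hq => hp (hsub hq)) (fun x y hxy => z1 _ (hout x y hxy)),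
    int_conv Ω (fun p => dot3 (pderivX u p) (pderivX u p) + dot3 (pderivY u p) (pderivY u p)) (by
      simp only [dot3, Fin.sum_univ_three]; fun_prop) K hK
      (fun p hp => z2 p fun hq => hp (hsub hq)) (fun x y hxy => z2 _ (hout x y hxy))]
  exact h

lemma dirEnergy_nonneg (Ω : Set (ℝ × ℝ)) (u : ℝ × ℝ → Fin 3 → ℝ) : 0 ≤ dirEnergy Ω u := by
  unfold dirEnergy
  refine integral_nonneg fun p => ?_
  simp only [dot3, Fin.sum_univ_three, Pi.zero_apply]
  nlinarith [mul_self_nonneg (pderivX u p 0), mul_self_nonneg (pderivX u p 1),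
    mul_self_nonneg (pderivX u p 2), mul_self_nonneg (pderivY u p 0),
    mul_self_nonneg (pderivY u p 1), mul_self_nonneg (pderivY u p 2)]

lemma final_alg (E V H : ℝ) (hH : 0 < H) (hE : 0 < E) (h : 32 * π * V ^ 2 ≤ E ^ 3)
    (hD : E + 2 * H * V ≤ 0) : 8 * π / H ^ 2 ≤ E := by
  have h1 : E ^ 2 ≤ 4 * H ^ 2 * V ^ 2 := by nlinarith
  have h2 : 8 * π * E ^ 2 ≤ H ^ 2 * E ^ 3 := by
    calc 8 * π * E ^ 2 ≤ 8 * π * (4 * H ^ 2 * V ^ 2) := by gcongr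
      _ = H ^ 2 * (32 * π * V ^ 2) := by ring
      _ ≤ H ^ 2 * E ^ 3 := by gcongr
  rw [div_le_iff₀ (by positivity)]
  have h3 : 0 < E ^ 2 := by positivity
  refine le_of_mul_le_mul_right ?_ h3
  calc _ ≤ _ := h2
    _ = _ := by ring

lemma final_sqrt (E H : ℝ) (hH : 0 < H) (h : 8 * π / H ^ 2 ≤ E) :
    2 * √(2 * π) / H ≤ √E := by
  apply Real.le_sqrt_of_sq_le
  rw [div_pow, mul_pow, Real.sq_sqrt (by positivity)]
  calc _ = 8 * π / H ^ 2 := by ring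
    _ ≤ E := h

/-- The origin is bounded away from the Nehari manifold `𝒩` and from `𝒩₋`:
`‖u‖ ≠ 0` and `D(u) ≤ 0` force `‖u‖² ≥ 8π/H²`; in particular every element of
`𝒩 = {D = 0, u ≠ 0}` and of `𝒩₋ = {D < 0}` satisfies `‖u‖ ≥ 2√(2π)/H`. -/
theorem origin_away_from_nehari (Ω : Set (ℝ × ℝ)) (hΩ : IsOpen Ω)
    (hΩb : Bornology.IsBounded Ω) (H : ℝ) (hH : 0 < H)
    (u : ℝ × ℝ → Fin 3 → ℝ) (hu : IsAdmissible Ω u) :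
    (dnorm Ω u ≠ 0 → Dfun Ω H 1 u ≤ 0 → 8 * Real.pi / H ^ 2 ≤ dirEnergy Ω u) ∧
    (dnorm Ω u ≠ 0 → Dfun Ω H 1 u = 0 →
      2 * Real.sqrt (2 * Real.pi) / H ≤ dnorm Ω u) ∧
    (Dfun Ω H 1 u < 0 → 2 * Real.sqrt (2 * Real.pi) / H ≤ dnorm Ω u) := by
  have hiso := iso_main Ω u hu
  have hE0 := dirEnergy_nonneg Ω u
  have hD : Dfun Ω H 1 u = dirEnergy Ω u + 2 * H * vol Ω u := by unfold Dfun; ring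
  have hpos : dnorm Ω u ≠ 0 → 0 < dirEnergy Ω u := by
    intro h
    by_contra hcon
    exact h (Real.sqrt_eq_zero_of_nonpos (not_lt.1 hcon))
  rw [hD]
  refine ⟨fun h1 h2 => final_alg _ _ H hH (hpos h1) hiso h2,
    fun h1 h2 => final_sqrt _ H hH (final_alg _ _ H hH (hpos h1) hiso h2.le),
    fun h2 => final_sqrt _ H hH (final_alg _ _ H hH ?_ hiso h2.le)⟩
  rcases hE0.lt_or_eq with h | h
  · exact h
  · exfalso
    rw [← h] at hiso h2
    have hv : vol Ω u ^ 2 ≤ 0 := by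
      have := Real.pi_pos
      by_contra hc
      have : 0 < 32 * π * vol Ω u ^ 2 := mul_pos (by positivity) (not_le.1 hc)
      norm_num at hiso
      linarith
    have : vol Ω u = 0 := by
      have := le_antisymm hv (sq_nonneg _)
      exact pow_eq_zero_iff (two_ne_zero) |>.1 this
    rw [this] at h2
    simp at h2
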